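/- arXiv:math/0111147 — 2 statements merged into one kernel-verified Lean document; each statement's English description precedes it below -/
import Mathlib

section
/- Let h : W → T be a morphism of irreducible varieties over ℂ with W normal. Then a general fibre of h is normal: there exists a dense open subset U ⊆ T such that for every t ∈ U the fibre h^{-1}(t) is a normal scheme. -/
open AlgebraicGeometry CategoryTheory Limits

noncomputable section

/-- A scheme is normal if all of its local rings (stalks) are integrally closed
domains. -/
def IsNormalScheme (X : Scheme) : Prop :=
  ∀ x : X, IsDomain (X.presheaf.stalk x) ∧ IsIntegrallyClosed (X.presheaf.stalk x)

open TensorProduct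
universe u
set_option linter.style.haveILetI false

set_option linter.unusedVariables false

/-- `M` is flat with respect to modules on which `a` acts bijectively. -/
def GFlat {A : Type u} [CommRing A] (a : A) (M : Type u) [AddCommGroup M] [Module A M] : Prop :=
  ∀ (N N' : Type u) [AddCommGroup N] [Module A N] [AddCommGroup N'] [Module A N']
    (f : N →ₗ[A] N'), Function.Bijective (fun x : N => a • x) →
    Function.Bijective (fun x : N' => a • x) → Function.Injective f →
    Function.Injective (f.lTensor M)

section GF
variable {A : Type u} [CommRing A]

lemma bij_of_mul {a b : A} {N : Type u} [AddCommGroup N] [Module A N]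
    (hb : Function.Bijective (fun x : N => (a * b) • x)) :
    Function.Bijective (fun x : N => a • x) := by
  refine ⟨?_, ?_⟩
  · intro x y hxy
    apply hb.1
    simp only at hxy ⊢
    rw [mul_comm, mul_smul, mul_smul, hxy]
  · intro y
    obtain ⟨x, hx⟩ := hb.2 y
    exact ⟨b • x, by simpa [mul_smul] using hx⟩

lemma GFlat.mul_right {a : A} {M : Type u} [AddCommGroup M] [Module A M] (h : GFlat a M) (b : A) :
    GFlat (a * b) M := by
  intro N N' _ _ _ _ f hb hb' hf
  exact h N N' f (bij_of_mul hb) (bij_of_mul hb') hf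

lemma GFlat.mul_left {a : A} {M : Type u} [AddCommGroup M] [Module A M] (h : GFlat a M) (b : A) :
    GFlat (b * a) M := by rw [mul_comm]; exact h.mul_right b

lemma GFlat.of_dvd {a b : A} {M : Type u} [AddCommGroup M] [Module A M] (h : GFlat a M)
    (hab : a ∣ b) : GFlat b M := by
  obtain ⟨c, rfl⟩ := hab; exact h.mul_right c

lemma GFlat.equiv {a : A} {M M' : Type u} [AddCommGroup M] [Module A M]
    [AddCommGroup M'] [Module A M'] (h : GFlat a M) (e : M ≃ₗ[A] M') : GFlat a M' := by
  intro N N' _ _ _ _ f hb hb' hf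
  have := h N N' f hb hb' hf
  have h2 : (f.lTensor M') = (e.toLinearMap.rTensor N') ∘ₗ (f.lTensor M) ∘ₗ
      (e.symm.toLinearMap.rTensor N) := by
    ext x y; simp
  rw [h2]
  simp only [LinearMap.coe_comp]
  exact ((LinearEquiv.rTensor N' e).injective.comp this).comp
    (LinearEquiv.rTensor N e.symm).injective

lemma GFlat.of_flat (a : A) {M : Type u} [AddCommGroup M] [Module A M] [Module.Flat A M] :
    GFlat a M := fun _ _ _ _ _ _ f _ _ hf => Module.Flat.lTensor_preserves_injective_linearMap f hf

lemma GFlat.of_smul_eq_zero {a : A} {M : Type u} [AddCommGroup M] [Module A M]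
    (h : ∀ m : M, a • m = 0) : GFlat a M := by
  intro N N' _ _ _ _ f hb hb' hf
  have : Subsingleton (M ⊗[A] N) := by
    refine subsingleton_of_forall_eq 0 fun x => ?_
    induction x with
    | zero => rfl
    | add x y hx hy => simp [hx, hy]
    | tmul m n =>
      obtain ⟨n', rfl⟩ := hb.2 n
      simp only
      rw [← TensorProduct.smul_tmul, h, TensorProduct.zero_tmul]
  exact Function.injective_of_subsingleton _

/-- generic exactness -/
lemma GFlat.inj_aux {a : A} {M' M M'' : Type u} [AddCommGroup M] [Module A M]
    [AddCommGroup M'] [Module A M'] [AddCommGroup M''] [Module A M'']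
    (h'' : GFlat a M'') (i : M' →ₗ[A] M) (p : M →ₗ[A] M'')
    (hi : Function.Injective i)
    (hex : Function.Exact i p) (hp : Function.Surjective p)
    (R F k : Type u) [AddCommGroup R] [Module A R] [AddCommGroup F] [Module A F]
    [AddCommGroup k] [Module A k] [Module.Flat A F] (u : R →ₗ[A] F) (v : F →ₗ[A] k)
    (hu : Function.Injective u) (huv : Function.Exact u v) (hv : Function.Surjective v)
    (hR : Function.Bijective (fun x : R => a • x)) (hF : Function.Bijective (fun x : F => a • x)) :
    Function.Injective (i.rTensor k) := by
  rw [injective_iff_map_eq_zero]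
  intro z hz
  obtain ⟨y, rfl⟩ := LinearMap.lTensor_surjective M' hv z
  have hc : ∀ y, (i.rTensor k) ((v.lTensor M') y) = (v.lTensor M) ((i.rTensor F) y) := fun y => by
    rw [← LinearMap.comp_apply, ← LinearMap.comp_apply, LinearMap.rTensor_comp_lTensor,
      LinearMap.lTensor_comp_rTensor]
  rw [hc] at hz
  obtain ⟨w, hw⟩ := (lTensor_exact M huv hv _).1 hz
  have hw2 : p.rTensor R w = 0 := by
    apply h'' R F u hR hF hu
    have : (u.lTensor M'') (p.rTensor R w) = (p.rTensor F) (u.lTensor M w) := by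
      rw [← LinearMap.comp_apply, ← LinearMap.comp_apply, LinearMap.rTensor_comp_lTensor,
        LinearMap.lTensor_comp_rTensor]
    rw [this, hw, map_zero]
    exact (rTensor_exact F hex hp _).2 ⟨y, rfl⟩
  obtain ⟨t, rfl⟩ := (rTensor_exact R hex hp _).1 hw2
  have h3 : (u.lTensor M) (i.rTensor R t) = (i.rTensor F) (u.lTensor M' t) := by
    rw [← LinearMap.comp_apply, ← LinearMap.comp_apply, LinearMap.rTensor_comp_lTensor,
        LinearMap.lTensor_comp_rTensor]
  rw [h3] at hw
  have := Module.Flat.rTensor_preserves_injective_linearMap (M := F) i hi hw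
  rw [← this]
  exact (lTensor_exact M' huv hv _).2 ⟨t, rfl⟩


lemma exists_flat_cover (a : A) (k : Type u) [AddCommGroup k] [Module A k]
    (hk : Function.Bijective (fun x : k => a • x)) :
    ∃ (F : Type u) (_ : AddCommGroup F) (_ : Module A F) (v : F →ₗ[A] k),
      Module.Flat A F ∧ Function.Surjective v ∧ Function.Bijective (fun x : F => a • x) := by
  have hku : ∀ x : Submonoid.powers a, IsUnit (algebraMap A (Module.End A k) x) := by
    rintro ⟨_, n, rfl⟩
    simp only [map_pow]
    refine IsUnit.pow _ ?_
    rw [Module.End.isUnit_iff]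
    exact hk
  have hFu := IsLocalizedModule.map_units (S := Submonoid.powers a)
    (LocalizedModule.mkLinearMap (Submonoid.powers a) (k →₀ A)) ⟨a, Submonoid.mem_powers a⟩
  rw [Module.End.isUnit_iff] at hFu
  refine ⟨LocalizedModule (Submonoid.powers a) (k →₀ A), inferInstance, inferInstance,
    LocalizedModule.lift (Submonoid.powers a) (Finsupp.linearCombination A id) hku, ?_, ?_, hFu⟩
  · have : Module.Flat A (Localization (Submonoid.powers a)) := IsLocalization.flat _ (Submonoid.powers a)
    exact Module.Flat.trans A (Localization (Submonoid.powers a)) _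
  · intro x
    refine ⟨LocalizedModule.mkLinearMap (Submonoid.powers a) (k →₀ A) (Finsupp.single x 1), ?_⟩
    have := LocalizedModule.lift_comp (Submonoid.powers a) (Finsupp.linearCombination A id) hku
    rw [← LinearMap.comp_apply, this]
    simp

lemma GFlat.inj {a : A} {M' M M'' : Type u} [AddCommGroup M] [Module A M]
    [AddCommGroup M'] [Module A M'] [AddCommGroup M''] [Module A M'']
    (h'' : GFlat a M'') (i : M' →ₗ[A] M) (p : M →ₗ[A] M'')
    (hi : Function.Injective i)
    (hex : Function.Exact i p) (hp : Function.Surjective p)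
    (k : Type u) [AddCommGroup k] [Module A k]
    (hk : Function.Bijective (fun x : k => a • x)) :
    Function.Injective (i.rTensor k) := by
  obtain ⟨F, _, _, v, _, hv, hFu⟩ := exists_flat_cover a k hk
  refine h''.inj_aux i p hi hex hp (LinearMap.ker v) F k (LinearMap.ker v).subtype v
    (Submodule.subtype_injective _) (LinearMap.exact_subtype_ker_map v) hv ⟨?_, ?_⟩ hFu
  · intro x y hxy
    apply Subtype.ext
    apply hFu.1
    exact congrArg Subtype.val hxy
  · rintro ⟨y, hy⟩
    obtain ⟨x, hx⟩ := hFu.2 y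
    refine ⟨⟨x, ?_⟩, Subtype.ext hx⟩
    apply hk.1
    simp only [smul_zero, ← map_smul]
    change a • x = y at hx
    rw [hx]; exact hy

lemma GFlat.ext {a : A} {M' M M'' : Type u} [AddCommGroup M] [Module A M]
    [AddCommGroup M'] [Module A M'] [AddCommGroup M''] [Module A M'']
    (h' : GFlat a M') (h'' : GFlat a M'') (i : M' →ₗ[A] M) (p : M →ₗ[A] M'')
    (hi : Function.Injective i)
    (hex : Function.Exact i p) (hp : Function.Surjective p) : GFlat a M := by
  intro N N' _ _ _ _ f hb hb' hf
  rw [injective_iff_map_eq_zero]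
  intro x hx
  have h1 : p.rTensor N x = 0 := by
    apply h'' N N' f hb hb' hf
    rw [← LinearMap.comp_apply, LinearMap.lTensor_comp_rTensor, ← LinearMap.rTensor_comp_lTensor,
      LinearMap.comp_apply, hx, map_zero, map_zero]
  obtain ⟨y, rfl⟩ := (rTensor_exact N hex hp _).1 h1
  rw [← LinearMap.comp_apply, LinearMap.lTensor_comp_rTensor, ← LinearMap.rTensor_comp_lTensor,
      LinearMap.comp_apply] at hx
  have h2 : f.lTensor M' y = 0 := h''.inj i p hi hex hp N' hb' (by rw [hx, map_zero])
  have h3 : y = 0 := h' N N' f hb hb' hf (by rw [h2, map_zero])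
  rw [h3, map_zero]

lemma GFlat.iUnion {a : A} {M : Type u} [AddCommGroup M] [Module A M]
    (S : ℕ → Submodule A M) (hS : Monotone S) (hU : ∀ x, ∃ n, x ∈ S n)
    (h : ∀ n, GFlat a (S n)) : GFlat a M := by
  intro N N' _ _ _ _ f hb hb' hf
  rw [injective_iff_map_eq_zero]
  intro x hx
  obtain ⟨P, hPf, hP⟩ := TensorProduct.exists_finite_submodule_left_of_setFinite {x} (Set.finite_singleton _)
  obtain ⟨y, rfl⟩ := hP rfl
  have hx2 : P.subtype.rTensor N' (f.lTensor P y) = 0 := by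
    rw [← LinearMap.comp_apply, LinearMap.rTensor_comp_lTensor, ← LinearMap.lTensor_comp_rTensor,
      LinearMap.comp_apply, hx]
  obtain ⟨Q, hPQ, hQf, hQ⟩ := TensorProduct.eq_zero_of_fg_of_subtype_eq_zero (Module.Finite.iff_fg.1 hPf) hx2
  have : ∃ n, Q ≤ S n := by
    obtain ⟨s, rfl⟩ := hQf
    simp only [Submodule.span_le]
    choose n hn using hU
    refine ⟨s.sup n, fun z hz => hS (Finset.le_sup hz) (hn z)⟩
  obtain ⟨n, hn⟩ := this
  have h4 : (Submodule.inclusion (hPQ.trans hn)).rTensor N y = 0 := by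
    apply h n N N' f hb hb' hf
    rw [← LinearMap.comp_apply, LinearMap.lTensor_comp_rTensor, ← LinearMap.rTensor_comp_lTensor,
      LinearMap.comp_apply]
    have : Submodule.inclusion (hPQ.trans hn) = Submodule.inclusion hn ∘ₗ Submodule.inclusion hPQ := rfl
    rw [this, LinearMap.rTensor_comp, LinearMap.comp_apply, hQ, map_zero, map_zero]
  have : P.subtype = (S n).subtype ∘ₗ Submodule.inclusion (hPQ.trans hn) := rfl
  rw [this, LinearMap.rTensor_comp, LinearMap.comp_apply, h4, map_zero]




/-- all cyclic modules are generically flat -/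
def GFI (A B : Type u) [CommRing A] [CommRing B] [Algebra A B] : Prop :=
  ∀ I : Ideal B, ∃ a : A, a ≠ 0 ∧ GFlat a (B ⧸ I)

lemma GFI.self [IsDomain A] : GFI A A := by
  intro I
  by_cases h : I = ⊥
  · refine ⟨1, one_ne_zero, ?_⟩
    subst h
    exact (GFlat.of_flat (M := A) 1).equiv (Submodule.quotEquivOfEqBot ⊥ rfl).symm
  · obtain ⟨a, ha, h0⟩ := Submodule.exists_mem_ne_zero_of_ne_bot h
    refine ⟨a, h0, GFlat.of_smul_eq_zero ?_⟩
    intro m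
    obtain ⟨m, rfl⟩ := Ideal.Quotient.mk_surjective m
    rw [Algebra.smul_def, Ideal.Quotient.algebraMap_eq, ← map_mul, Ideal.Quotient.eq_zero_iff_mem]
    exact I.mul_mem_right _ ha

lemma GFI.of_surj {B C : Type u} [CommRing B] [Algebra A B] [CommRing C] [Algebra A C]
    (h : GFI A B) (f : B →ₐ[A] C) (hf : Function.Surjective f) : GFI A C := by
  intro I
  obtain ⟨a, ha, hh⟩ := h (RingHom.ker ((Ideal.Quotient.mkₐ A I).comp f))
  exact ⟨a, ha, hh.equiv (Ideal.quotientKerAlgEquivOfSurjective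
    (f := (Ideal.Quotient.mkₐ A I).comp f)
    ((Ideal.Quotient.mkₐ_surjective A I).comp hf)).toLinearEquiv⟩

lemma step_equiv {B C : Type u} [CommRing B] [AddCommGroup C]
    [Module B C] (S T : Submodule B C) (x : C) (hx : x ∈ T)
    (hT : ∀ y ∈ T, ∃ b : B, ∃ z ∈ S, y = b • x + z) :
    ∃ p : T →ₗ[B] (B ⧸ S.comap (LinearMap.toSpanSingleton B C x)),
      Function.Surjective p ∧ ∀ y, p y = 0 ↔ y.1 ∈ S := by
  let q : B →ₗ[B] (T ⧸ S.comap T.subtype) :=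
    (S.comap T.subtype).mkQ ∘ₗ LinearMap.toSpanSingleton B _ ⟨x, hx⟩
  have hq : Function.Surjective q := by
    intro y
    obtain ⟨⟨y, hy⟩, rfl⟩ := Submodule.mkQ_surjective _ y
    obtain ⟨b, z, hz, rfl⟩ := hT y hy
    refine ⟨b, ?_⟩
    simp only [q, LinearMap.comp_apply]
    rw [← sub_eq_zero, ← map_sub, Submodule.mkQ_apply, Submodule.Quotient.mk_eq_zero,
      Submodule.mem_comap]
    simp only [LinearMap.toSpanSingleton_apply, Submodule.subtype_apply, AddSubgroupClass.coe_sub,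
      Submodule.coe_smul]
    have : b • x - (b • x + z) = - z := by abel
    rw [this]
    exact neg_mem hz
  have hker : LinearMap.ker q = S.comap (LinearMap.toSpanSingleton B C x) := by
    ext b
    simp only [q, LinearMap.mem_ker, LinearMap.comp_apply]
    rw [Submodule.mkQ_apply, Submodule.Quotient.mk_eq_zero]
    rfl
  let e := (Submodule.quotEquivOfEq _ _ hker.symm).trans (q.quotKerEquivOfSurjective hq)
  refine ⟨e.symm.toLinearMap ∘ₗ (S.comap T.subtype).mkQ,
    e.symm.surjective.comp (Submodule.mkQ_surjective _), fun y => ?_⟩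
  simp only [LinearMap.comp_apply, LinearEquiv.coe_coe, LinearEquiv.map_eq_zero_iff]
  rw [Submodule.mkQ_apply, Submodule.Quotient.mk_eq_zero]
  rfl

lemma GFlat.step {a : A} {B C : Type u} [CommRing B] [Algebra A B] [AddCommGroup C] [Module A C]
    [Module B C] [IsScalarTower A B C] (S T : Submodule B C) (hST : S ≤ T) (x : C) (hx : x ∈ T)
    (hT : ∀ y ∈ T, ∃ b : B, ∃ z ∈ S, y = b • x + z)
    (h1 : GFlat a S) (h2 : GFlat a (B ⧸ S.comap (LinearMap.toSpanSingleton B C x))) :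
    GFlat a T := by
  obtain ⟨p, hp, hp0⟩ := step_equiv S T x hx hT
  refine GFlat.ext h1 h2
    ((Submodule.inclusion hST).restrictScalars A) (p.restrictScalars A)
    (Submodule.inclusion_injective hST) ?_ hp
  intro y
  rw [LinearMap.coe_restrictScalars, hp0]
  constructor
  · intro hy
    exact ⟨⟨y.1, hy⟩, rfl⟩
  · rintro ⟨z, rfl⟩
    exact z.2

lemma GFI.gen [IsDomain A] {B C : Type u} [CommRing B] [Algebra A B] [CommRing C] [Algebra A C]
    [Algebra B C] [IsScalarTower A B C] [IsNoetherianRing B]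
    (h : GFI A B) (x : C) (hx : ∀ y : C, ∃ n, y ∈ Submodule.span B ((fun i : ℕ => x ^ i) '' Set.Iio n)) :
    ∃ a : A, a ≠ 0 ∧ GFlat a C := by
  let S : ℕ → Submodule B C := fun n => Submodule.span B ((fun i : ℕ => x ^ i) '' Set.Iio n)
  have hSmono : Monotone S := fun m n hmn =>
    Submodule.span_mono (Set.image_mono (Set.Iio_subset_Iio hmn))
  have hxS : ∀ n, x ^ n ∈ S (n + 1) := fun n => Submodule.subset_span ⟨n, by simp, rfl⟩
  have hmul : ∀ n, ∀ y ∈ S n, x * y ∈ S (n + 1) := by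
    intro n y hy
    induction hy using Submodule.span_induction with
    | mem y hy =>
      obtain ⟨i, hi, rfl⟩ := hy
      exact Submodule.subset_span ⟨i + 1, by simpa using hi, by simp [pow_succ']⟩
    | zero => simp
    | add y z _ _ h1 h2 => rw [mul_add]; exact add_mem h1 h2
    | smul b y _ h1 => rw [mul_smul_comm]; exact Submodule.smul_mem _ _ h1
  let I : ℕ →o Ideal B := ⟨fun n => (S n).comap (LinearMap.toSpanSingleton B C (x ^ n)), by
    refine monotone_nat_of_le_succ fun n b hb => ?_
    simp only [Submodule.mem_comap, LinearMap.toSpanSingleton_apply] at hb ⊢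
    rw [pow_succ', ← mul_smul_comm]
    exact hmul n _ hb⟩
  have hI : ∀ n b, b ∈ I n ↔ b • x ^ n ∈ S n := fun n b => Iff.rfl
  obtain ⟨n0, hn0⟩ := monotone_stabilizes_iff_noetherian.2 (inferInstance : IsNoetherian B B) I
  choose a ha0 ha using fun n => h (I n)
  let a' := ∏ i ∈ Finset.range (n0 + 1), a i
  have ha' : ∀ n, GFlat a' (B ⧸ I n) := by
    have h1 : ∀ n ≤ n0, GFlat a' (B ⧸ I n) := fun n hn =>
      (ha n).of_dvd (Finset.dvd_prod_of_mem _ (by simp [hn]))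
    intro n
    rcases le_total n n0 with hn | hn
    · exact h1 n hn
    · rw [← hn0 n hn]; exact h1 n0 le_rfl
  refine ⟨a', Finset.prod_ne_zero_iff.2 fun i _ => ha0 i, ?_⟩
  have hS : ∀ n, GFlat a' (S n) := by
    intro n
    induction n with
    | zero =>
      apply GFlat.of_smul_eq_zero
      rintro ⟨m, hm⟩
      have : m = 0 := by simpa [S] using hm
      subst this
      ext; simp
    | succ n ih =>
      refine GFlat.step (S n) (S (n + 1)) (hSmono n.le_succ) (x ^ n) (hxS n) ?_ ih (ha' n)
      intro y hy
      simp only [S] at hy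
      rw [show Set.Iio (n + 1) = insert n (Set.Iio n) by ext; simp [le_iff_eq_or_lt],
        Set.image_insert_eq, Submodule.mem_span_insert] at hy
      obtain ⟨b, z, hz, rfl⟩ := hy
      exact ⟨b, z, hz, rfl⟩
  refine GFlat.iUnion (fun n => (S n).restrictScalars A) hSmono hx fun n => ?_
  exact (hS n).equiv ((Submodule.restrictScalarsEquiv A B C (S n)).symm.restrictScalars A)

lemma GFI.poly [IsDomain A] {B : Type u} [CommRing B] [Algebra A B] [IsNoetherianRing B]
    (h : GFI A B) : GFI A (Polynomial B) := by
  intro I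
  refine GFI.gen (B := B) h (Ideal.Quotient.mk I Polynomial.X) ?_
  intro y
  obtain ⟨y, rfl⟩ := Ideal.Quotient.mk_surjective y
  obtain ⟨n, hn⟩ : ∃ n, n = y.natDegree + 1 := ⟨_, rfl⟩
  refine ⟨n, ?_⟩
  rw [y.as_sum_range_C_mul_X_pow, ← hn, map_sum]
  refine sum_mem fun i hi => ?_
  rw [map_mul, map_pow]
  have : Ideal.Quotient.mk I (Polynomial.C (y.coeff i)) = algebraMap B _ (y.coeff i) := rfl
  rw [this, ← Algebra.smul_def]
  exact Submodule.smul_mem _ _ (Submodule.subset_span ⟨i, by simpa using hi, rfl⟩)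

lemma GFI.mvPoly [IsDomain A] [IsNoetherianRing A] (n : ℕ) : GFI A (MvPolynomial (Fin n) A) := by
  induction n with
  | zero =>
    exact GFI.self.of_surj (MvPolynomial.isEmptyAlgEquiv A (Fin 0)).symm.toAlgHom
      (MvPolynomial.isEmptyAlgEquiv A (Fin 0)).symm.surjective
  | succ n ih =>
    exact ih.poly.of_surj (MvPolynomial.finSuccEquiv A n).symm.toAlgHom
      (MvPolynomial.finSuccEquiv A n).symm.surjective

lemma GFI.of_finiteType [IsDomain A] [IsNoetherianRing A] (B : Type u) [CommRing B] [Algebra A B]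
    [Algebra.FiniteType A B] : GFI A B := by
  obtain ⟨n, f, hf⟩ := Algebra.FiniteType.iff_quotient_mvPolynomial''.1 (inferInstance : Algebra.FiniteType A B)
  exact (GFI.mvPoly n).of_surj f hf

lemma GFI.module [IsDomain A] {B : Type u} [CommRing B] [Algebra A B] [IsNoetherianRing B]
    (h : GFI A B) (M : Type u) [AddCommGroup M] [Module A M] [Module B M] [IsScalarTower A B M]
    [Module.Finite B M] : ∃ a : A, a ≠ 0 ∧ GFlat a M := by
  have key : ∀ (N : Type u) [AddCommGroup N] [Module B N] [Module.Finite B N],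
      let := Module.compHom N (algebraMap A B); ∃ a : A, a ≠ 0 ∧ GFlat a N := by
    intro N _ _ hN
    induction hN using IsNoetherianRing.induction_on_isQuotientEquivQuotientPrime B with
    | subsingleton N =>
      let := Module.compHom N (algebraMap A B)
      exact ⟨1, one_ne_zero, GFlat.of_smul_eq_zero fun m => Subsingleton.elim _ _⟩
    | quotient N p e =>
      let := Module.compHom N (algebraMap A B)
      have : IsScalarTower A B N := ⟨fun a b n => by
        change _ = (algebraMap A B a) • (b • n)
        rw [Algebra.smul_def, mul_smul]⟩
      obtain ⟨a, ha, hh⟩ := h p.asIdeal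
      exact ⟨a, ha, hh.equiv (e.symm.restrictScalars A)⟩
    | exact N₁ N₂ N₃ f g hf hg hfg h1 h3 =>
      let := Module.compHom N₁ (algebraMap A B)
      let := Module.compHom N₂ (algebraMap A B)
      let := Module.compHom N₃ (algebraMap A B)
      obtain ⟨a, ha, h1⟩ := h1
      obtain ⟨b, hb, h3⟩ := h3
      refine ⟨a * b, mul_ne_zero ha hb, GFlat.ext (h1.mul_right b) (h3.mul_left a)
        ⟨f.toAddHom, fun a x => f.map_smul _ x⟩ ⟨g.toAddHom, fun a x => g.map_smul _ x⟩ hf hfg hg⟩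
  obtain ⟨a, ha, hh⟩ := key M
  have hm : Module.compHom M (algebraMap A B) = ‹Module A M› := Module.ext' _ _ fun r m => by
    change algebraMap A B r • m = r • m
    simp
  rw [hm] at hh
  exact ⟨a, ha, hh⟩

end GF


section GE
variable {A : Type u} [CommRing A]

lemma ker_baseChange_mk (k : Type u) [CommRing k] [Algebra A k] {B : Type u} [CommRing B] [Algebra A B]
    (I : Ideal B) :
    RingHom.ker (Algebra.TensorProduct.map (AlgHom.id A k) (Ideal.Quotient.mkₐ A I)) =
      I.map (Algebra.TensorProduct.includeRight : B →ₐ[A] k ⊗[A] B) := by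
  rw [Algebra.TensorProduct.lTensor_ker _ (Ideal.Quotient.mkₐ_surjective A I)]
  congr 1
  exact Ideal.Quotient.mkₐ_ker A I

lemma exists_coker {B : Type u} [CommRing B] [Algebra A B] (M' M : Type u)
    [AddCommGroup M'] [Module B M'] [AddCommGroup M] [Module B M] 
    [Module.Finite B M] (f : M' →ₗ[B] M) :
    ∃ (Q : Type u) (_ : AddCommGroup Q) (_ : Module B Q) (_ : Module A Q) (_ : IsScalarTower A B Q)
      (_ : Module.Finite B Q) (p : M →ₗ[B] Q), Function.Surjective p ∧ Function.Exact f p := by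
  refine ⟨M ⧸ LinearMap.range f, inferInstance, inferInstance, Module.compHom _ (algebraMap A B), ?_, 
    inferInstance, (LinearMap.range f).mkQ, Submodule.mkQ_surjective _, LinearMap.exact_map_mkQ_range f⟩
  let := Module.compHom (M ⧸ LinearMap.range f) (algebraMap A B)
  refine ⟨fun a b n => ?_⟩
  rw [Algebra.smul_def, mul_smul]; rfl

lemma generic_inj [IsDomain A] [IsNoetherianRing A] {B : Type u} [CommRing B] [Algebra A B]
    [Algebra.FiniteType A B] (M' M : Type u)
    [AddCommGroup M'] [Module B M'] [Module A M'] [IsScalarTower A B M']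
    [AddCommGroup M] [Module B M] [Module A M] [IsScalarTower A B M]
    [Module.Finite B M] (f : M' →ₗ[B] M) (hf : Function.Injective f) :
    ∃ a : A, a ≠ 0 ∧ ∀ (k : Type u) [Field k] [Algebra A k], algebraMap A k a ≠ 0 →
      Function.Injective ((f.restrictScalars A).lTensor k) := by
  have : IsNoetherianRing B := Algebra.FiniteType.isNoetherianRing A B
  obtain ⟨Q, _, _, _, _, _, p, hp, hfp⟩ := exists_coker (A := A) M' M f
  obtain ⟨a, ha, hfl⟩ := (GFI.of_finiteType B (A := A)).module Q
  refine ⟨a, ha, fun k _ _ hk => ?_⟩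
  have hinj := hfl.inj (f.restrictScalars A) (p.restrictScalars A) hf
    hfp hp k (by
      have : (fun x : k => a • x) = fun x => algebraMap A k a * x := by
        ext; rw [Algebra.smul_def]
      rw [this]
      exact mulLeft_bijective₀ _ hk)
  rwa [← LinearMap.lTensor_inj_iff_rTensor_inj] at hinj

lemma pi_tensor_zero {ι : Type u} [Finite ι] (k : Type u) [AddCommGroup k] [Module A k]
    (M : ι → Type u) [∀ i, AddCommGroup (M i)] [∀ i, Module A (M i)] (y : k ⊗[A] ((i : ι) → M i))
    (hy : ∀ i, ((LinearMap.proj i : ((i : ι) → M i) →ₗ[A] M i).lTensor k) y = 0) : y = 0 := by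
  have := Fintype.ofFinite ι
  classical
  have h1 : y = ∑ i, ((LinearMap.single A M i).lTensor k)
      (((LinearMap.proj i : ((i : ι) → M i) →ₗ[A] M i).lTensor k) y) := by
    clear hy
    induction y with
    | zero => simp
    | add y z hy hz =>
      simp only [map_add, Finset.sum_add_distrib]
      rw [← hy, ← hz]
    | tmul c m =>
      simp only [LinearMap.lTensor_tmul]
      rw [← TensorProduct.tmul_sum]
      congr 1
      exact (LinearMap.sum_single_apply _ m).symm
  rw [h1]
  simp [hy]

lemma generic_colon_aux [IsDomain A] [IsNoetherianRing A] {B C : Type u} [CommRing B] [Algebra A B]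
    [Algebra.FiniteType A B] {ι : Type u} [Finite ι] [CommRing C] [Algebra A C] [Algebra B C]
    [IsScalarTower A B C] (M : ι → Type u) 
    [∀ i, CommRing (M i)] [∀ i, Algebra A (M i)] [∀ i, Algebra B (M i)]
    [∀ i, IsScalarTower A B (M i)] [∀ i, Module.Finite B (M i)]
    (f : ∀ i, C →ₗ[B] M i) (h : ∀ x, (∀ i, f i x = 0) → x = 0) :
    ∃ a : A, a ≠ 0 ∧ ∀ (k : Type u) [Field k] [Algebra A k], algebraMap A k a ≠ 0 →
      ∀ x : k ⊗[A] C, (∀ i, ((f i).restrictScalars A).lTensor k x = 0) → x = 0 := by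
  have := Fintype.ofFinite ι
  obtain ⟨a, ha, H⟩ := generic_inj (A := A) C (∀ i, M i) (LinearMap.pi f) (by
    rw [injective_iff_map_eq_zero]
    intro x hx
    exact h x fun i => congrFun hx i)
  refine ⟨a, ha, fun k _ _ hk x hx => ?_⟩
  apply H k hk
  rw [map_zero]
  apply pi_tensor_zero
  intro i
  rw [← hx i, ← LinearMap.comp_apply, ← LinearMap.lTensor_comp]
  rfl

lemma generic_colon [IsDomain A] [IsNoetherianRing A] {B : Type u} [CommRing B] [Algebra A B]
    [Algebra.FiniteType A B] {ι : Type u} [Finite ι] (I : Ideal B) (J : ι → Ideal B) (g : ι → B)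
    (h : ∀ x, x ∈ I ↔ ∀ i, x * g i ∈ J i) :
    ∃ a : A, a ≠ 0 ∧ ∀ (k : Type u) [Field k] [Algebra A k], algebraMap A k a ≠ 0 →
      ∀ x : k ⊗[A] B, (∀ i, x * (1 ⊗ₜ g i) ∈
        (J i).map (Algebra.TensorProduct.includeRight : B →ₐ[A] k ⊗[A] B)) →
        x ∈ I.map (Algebra.TensorProduct.includeRight : B →ₐ[A] k ⊗[A] B) := by
  let f1 : ∀ i, B →ₗ[B] B ⧸ J i := fun i => 
    (J i).mkQ ∘ₗ LinearMap.toSpanSingleton B B (g i)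
  have hf1 : ∀ i x, f1 i x = Ideal.Quotient.mk (J i) (x * g i) := fun i x => rfl
  let f : ∀ i, (B ⧸ I) →ₗ[B] B ⧸ J i := fun i => Submodule.liftQ I (f1 i) (by
    intro x hx
    rw [LinearMap.mem_ker, hf1, Ideal.Quotient.eq_zero_iff_mem]
    exact (h x).1 hx i)
  have hf : ∀ i x, f i (Ideal.Quotient.mk I x) = Ideal.Quotient.mk (J i) (x * g i) := fun i x => rfl
  clear_value f
  obtain ⟨a, ha, H⟩ := generic_colon_aux (A := A) (fun i => B ⧸ J i) f (by
    intro x hx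
    obtain ⟨x, rfl⟩ := Ideal.Quotient.mk_surjective x
    rw [Ideal.Quotient.eq_zero_iff_mem, h]
    intro i
    rw [← Ideal.Quotient.eq_zero_iff_mem, ← hf, hx i])
  refine ⟨a, ha, fun k _ _ hk x hx => ?_⟩
  rw [← ker_baseChange_mk, RingHom.mem_ker]
  apply H k hk
  intro i
  have hxi := hx i
  rw [← ker_baseChange_mk, RingHom.mem_ker] at hxi
  rw [← hxi]
  clear hx hxi
  induction x with
  | zero => simp
  | add x y hx hy => simp only [map_add, add_mul, hx, hy]
  | tmul c b =>
    simp only [Algebra.TensorProduct.map_tmul, Algebra.TensorProduct.tmul_mul_tmul, 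
      LinearMap.lTensor_tmul, mul_one, AlgHom.id_apply, LinearMap.restrictScalars_apply]
    congr 1
    exact hf i b
end GE


section GS

lemma generic_smooth {A : Type u} [CommRing A] [IsDomain A] [IsNoetherianRing A] [CharZero A]
    {C : Type u} [CommRing C] [IsDomain C] [Algebra A C]
    [Algebra.FiniteType A C] (hinj : Function.Injective (algebraMap A C)) :
    ∃ f : C, f ≠ 0 ∧ Algebra.Smooth A (Localization.Away f) := by
  have : Algebra.FinitePresentation A C :=
    Algebra.FinitePresentation.of_finiteType.1 inferInstance
  let K := FractionRing A
  let L := FractionRing C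
  have : FaithfulSMul A C := (faithfulSMul_iff_algebraMap_injective A C).2 hinj
  have : FaithfulSMul A L := by
    rw [faithfulSMul_iff_algebraMap_injective, IsScalarTower.algebraMap_eq A C L]
    exact (IsFractionRing.injective C L).comp hinj
  let : Algebra K L := FractionRing.liftAlgebra A L
  have : IsScalarTower A K L := FractionRing.isScalarTower_liftAlgebra A L
  have : CharZero K := IsFractionRing.charZero_of_isFractionRing A
  have : Algebra.EssFiniteType C L := Algebra.EssFiniteType.of_isLocalization _ (nonZeroDivisors C)
  have : Algebra.EssFiniteType A L := Algebra.EssFiniteType.comp A C L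
  have : Algebra.EssFiniteType K L := Algebra.EssFiniteType.of_comp A K L
  have h1 : Algebra.FormallySmooth K L := Algebra.FormallySmooth.of_perfectField
  have h2 : Algebra.FormallySmooth A K := Algebra.FormallySmooth.of_isLocalization (nonZeroDivisors A)
  have h3 : Algebra.FormallySmooth A L := Algebra.FormallySmooth.comp A K L
  have : IsLocalization.AtPrime L (⊥ : Ideal C) := by
    unfold IsLocalization.AtPrime
    rw [Ideal.primeCompl_bot]
    exact (inferInstance : IsLocalization (nonZeroDivisors C) L)
  have e : L ≃ₐ[C] Localization.AtPrime (⊥ : Ideal C) := 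
    IsLocalization.algEquiv (⊥ : Ideal C).primeCompl _ _
  have h4 : Algebra.IsSmoothAt A (⊥ : Ideal C) := 
    Algebra.FormallySmooth.of_equiv (e.restrictScalars A)
  obtain ⟨f, hf, h5⟩ := Algebra.IsSmoothAt.exists_notMem_smooth A (⊥ : Ideal C)
  exact ⟨f, by simpa using hf, h5⟩

end GS


section NR

/-- All local rings are integrally closed domains. -/
def NRing (D : Type*) [CommRing D] : Prop :=
  ∀ (q : Ideal D) [q.IsPrime],
    IsDomain (Localization.AtPrime q) ∧ IsIntegrallyClosed (Localization.AtPrime q)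

lemma NRing.of_isLocalization {D : Type*} [CommRing D] (h : NRing D) (M : Submonoid D)
    (E : Type*) [CommRing E] [Algebra D E] [IsLocalization M E] : NRing E := by
  intro q _
  have := IsLocalization.isLocalization_isLocalization_atPrime_isLocalization M
    (Localization.AtPrime q) q
  let e := (IsLocalization.algEquiv (q.comap (algebraMap D E)).primeCompl
    (Localization.AtPrime q) (Localization.AtPrime (q.comap (algebraMap D E)))).toRingEquiv
  obtain ⟨h1, h2⟩ := h (q.comap (algebraMap D E))
  exact ⟨MulEquiv.isDomain _ e.toMulEquiv, IsIntegrallyClosed.of_equiv e.symm⟩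

lemma NRing.isDomain_of {E : Type*} [CommRing E] [IsNoetherianRing E] [Nontrivial E]
    (h : NRing E) (hid : ∀ e : E, e * e = e → e = 0 ∨ e = 1) :
    IsDomain E ∧ IsIntegrallyClosed E := by
  have h1 : IsDomain E := by
    have : NoZeroDivisors E := by
      refine ⟨?_⟩
      intro x y hxy
      by_contra! hne
      let I : Ideal E := Ideal.span {x}
      let N : Ideal E := Submodule.annihilator I
      have hN : ∀ r, r ∈ N ↔ r * x = 0 := by
        intro r
        exact Submodule.mem_annihilator_span_singleton x r
      have hI : IsIdempotentElem N := by
        apply le_antisymm Ideal.mul_le_left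
        intro z hz
        let P : Ideal E := Submodule.comap (LinearMap.toSpanSingleton E E z) (N * N)
        have hP : ∀ r, r ∈ P ↔ r * z ∈ N * N := fun r => Iff.rfl
        by_contra hc
        have hPt : P ≠ ⊤ := by
          intro ht
          apply hc
          have := (hP 1).1 (ht ▸ Submodule.mem_top)
          rwa [one_mul] at this
        obtain ⟨m, hm, hPm⟩ := Ideal.exists_le_maximal P hPt
        obtain ⟨hd, -⟩ := h m
        have h0 : algebraMap E (Localization.AtPrime m) z * algebraMap E (Localization.AtPrime m) x = 0 := by
          rw [← map_mul, (hN z).1 hz, map_zero]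
        rcases mul_eq_zero.1 h0 with h0 | h0
        · obtain ⟨⟨s, hs⟩, hs'⟩ := (IsLocalization.map_eq_zero_iff m.primeCompl _ _).1 h0
          apply hs
          apply hPm
          rw [hP]
          simp only at hs'
          rw [hs']
          exact zero_mem _
        · obtain ⟨⟨s, hs⟩, hs'⟩ := (IsLocalization.map_eq_zero_iff m.primeCompl _ _).1 h0
          apply hs
          apply hPm
          rw [hP]
          exact Ideal.mul_mem_mul ((hN s).2 hs') hz
      obtain ⟨e, he, hNe⟩ := (Ideal.isIdempotentElem_iff_of_fg N (IsNoetherian.noetherian N)).1 hI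
      rcases hid e he with rfl | rfl
      · have : y ∈ N := (hN y).2 (by rw [mul_comm, hxy])
        rw [hNe] at this
        simp at this
        exact hne.2 this
      · have : (1 : E) ∈ N := by rw [hNe]; exact Submodule.mem_span_singleton_self 1
        rw [hN, one_mul] at this
        exact hne.1 this
    exact NoZeroDivisors.to_isDomain E
  refine ⟨h1, ?_⟩
  exact IsIntegrallyClosed.of_localization_maximal fun p _ _ => (h p).2

lemma isIntegrallyClosedIn_localization {R S Rf Sf : Type*} [CommRing R] [CommRing S] [Algebra R S]
    [CommRing Rf] [CommRing Sf] [Algebra R Rf] [Algebra S Sf]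
    [Algebra Rf Sf] [Algebra R Sf] [IsScalarTower R S Sf] [IsScalarTower R Rf Sf]
    (M : Submonoid R) [IsLocalization M Rf] [IsLocalization (Algebra.algebraMapSubmonoid S M) Sf]
    (h : IsIntegrallyClosedIn R S) : IsIntegrallyClosedIn Rf Sf := by
  rw [isIntegrallyClosedIn_iff] at h ⊢
  obtain ⟨hinj, hcl⟩ := h
  constructor
  · rw [injective_iff_map_eq_zero]
    intro y hy
    obtain ⟨⟨r, m⟩, hr⟩ := IsLocalization.surj M y
    simp only at hr
    have h1 : algebraMap S Sf (algebraMap R S r) = 0 := by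
      rw [← IsScalarTower.algebraMap_apply, IsScalarTower.algebraMap_apply R Rf Sf, ← hr, map_mul, hy,
        zero_mul]
    obtain ⟨⟨_, m', hm', rfl⟩, h2⟩ :=
      (IsLocalization.map_eq_zero_iff (Algebra.algebraMapSubmonoid S M) _ _).1 h1
    simp only at h2
    rw [← map_mul, map_eq_zero_iff _ hinj] at h2
    have h3 : algebraMap R Rf r = 0 := (IsLocalization.map_eq_zero_iff M _ _).2 ⟨⟨m', hm'⟩, h2⟩
    rw [h3] at hr
    exact (IsLocalization.map_units Rf m).mul_left_eq_zero.1 hr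
  · intro s hs
    obtain ⟨⟨x, _, m₁, hm₁, rfl⟩, e⟩ := IsLocalization.surj (Algebra.algebraMapSubmonoid S M) s
    simp only [← IsScalarTower.algebraMap_apply] at e
    obtain ⟨⟨m₂, hm₂⟩, hm₂s⟩ := IsIntegral.exists_multiple_integral_of_isLocalization M _ hs
    simp only [Submonoid.smul_def, Algebra.smul_def] at hm₂s
    obtain ⟨m₃, hm₃, hm₃s⟩ := IsLocalization.exists_isIntegral_smul_of_isIntegral_map (Sₘ := Sf)
      M (x := m₂ • x) <| by
        simp only [Algebra.smul_def, map_mul, ← IsScalarTower.algebraMap_apply, ← e, ← mul_assoc]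
        exact hm₂s.mul (isIntegral_algebraMap)
    obtain ⟨r, hr⟩ := hcl hm₃s
    let m : M := ⟨m₁ * (m₂ * m₃), mul_mem hm₁ (mul_mem hm₂ hm₃)⟩
    refine ⟨IsLocalization.mk' Rf r m, ?_⟩
    have hu : IsUnit (algebraMap R Sf m) := by
      rw [IsScalarTower.algebraMap_apply R Rf Sf]
      exact (IsLocalization.map_units Rf m).map _
    apply hu.mul_left_cancel
    rw [IsScalarTower.algebraMap_apply R Rf Sf, ← map_mul, IsLocalization.mk'_spec',
      ← IsScalarTower.algebraMap_apply, IsScalarTower.algebraMap_apply R S Sf, hr, 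
      ← IsScalarTower.algebraMap_apply R Rf Sf]
    simp only [Algebra.smul_def, map_mul, ← IsScalarTower.algebraMap_apply, ← e, m]
    ring

lemma NRing.of_isIntegrallyClosedIn {D E : Type*} [CommRing D] [CommRing E] [Algebra D E]
    [IsNoetherianRing E] (hE : NRing E) (h : IsIntegrallyClosedIn D E) : NRing D := by
  intro q _
  let R := Localization.AtPrime q
  let S := Localization (Algebra.algebraMapSubmonoid E q.primeCompl)
  have hS : NRing S := hE.of_isLocalization (Algebra.algebraMapSubmonoid E q.primeCompl) S
  have hn : IsNoetherianRing S := IsLocalization.isNoetherianRing 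
    (Algebra.algebraMapSubmonoid E q.primeCompl) S inferInstance
  have hc : IsIntegrallyClosedIn R S := isIntegrallyClosedIn_localization (S := E) q.primeCompl h
  obtain ⟨hinj, hcl⟩ := isIntegrallyClosedIn_iff.1 hc
  have : Nontrivial S := hinj.nontrivial
  obtain ⟨h1, h2⟩ := hS.isDomain_of (by
    intro e he
    obtain ⟨r, rfl⟩ := hcl (x := e) ⟨Polynomial.X ^ 2 - Polynomial.X, by monicity!, by
      simp [pow_two, he]⟩
    rw [← map_mul] at he
    have hr := hinj he
    have h3 : r * (1 - r) = 0 := by rw [mul_sub, hr, mul_one, sub_self]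
    rcases IsLocalRing.isUnit_or_isUnit_one_sub_self r with hu | hu
    · right
      have := hu.mul_right_eq_zero.1 h3
      rw [← sub_eq_zero.1 this, map_one]
    · left
      rw [hu.mul_left_eq_zero.1 h3, map_zero])
  have : FaithfulSMul R S := (faithfulSMul_iff_algebraMap_injective _ _).2 hinj
  exact ⟨hinj.isDomain (algebraMap R S), IsIntegrallyClosed.of_isIntegrallyClosed_of_isIntegrallyClosedIn R S⟩

end NR


section NS

lemma NRing.of_equiv {D E : Type*} [CommRing D] [CommRing E] (h : NRing D) (e : D ≃+* E) :
    NRing E := by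
  let : Algebra D E := e.toRingHom.toAlgebra
  have : IsLocalization (IsUnit.submonoid D) E :=
    IsLocalization.isLocalization_of_algEquiv (IsUnit.submonoid D) (S := D) (AlgEquiv.ofRingEquiv (f := e) fun _ => rfl)
  exact h.of_isLocalization (IsUnit.submonoid D) E

lemma NRing.of_cover {D : Type*} [CommRing D]
    (h : ∀ (q : Ideal D) [q.IsPrime], ∃ g ∉ q, NRing (Localization.Away g)) : NRing D := by
  intro q hq
  obtain ⟨g, hg, hn⟩ := h q
  let E := Localization.Away g
  have hd : Disjoint (Submonoid.powers g : Set D) q :=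
    (Ideal.disjoint_powers_iff_notMem_of_isPrime _).mpr hg
  have hp : (q.map (algebraMap D E)).IsPrime :=
    IsLocalization.isPrime_of_isPrime_disjoint (Submonoid.powers g) E q hq hd
  have := IsLocalization.isLocalization_isLocalization_atPrime_isLocalization (Submonoid.powers g)
    (Localization.AtPrime (q.map (algebraMap D E))) (q.map (algebraMap D E))
  simp_rw [IsLocalization.under_map_of_isPrime_disjoint (Submonoid.powers g) E hq hd] at this
  let e := (IsLocalization.algEquiv q.primeCompl
    (Localization.AtPrime (q.map (algebraMap D E))) (Localization.AtPrime q)).toRingEquiv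
  obtain ⟨h1, h2⟩ := hn (q.map (algebraMap D E))
  exact ⟨MulEquiv.isDomain _ e.symm.toMulEquiv, IsIntegrallyClosed.of_equiv e⟩

lemma NRing.of_etale_field (L E : Type*) [Field L] [CommRing E] [Algebra L E] [Algebra.Etale L E] :
    IsNoetherianRing E ∧ NRing E := by
  have : Module.Finite L E := Algebra.FormallyUnramified.finite_of_free _ _
  have : IsReduced E := Algebra.FormallyUnramified.isReduced_of_field L E
  have : IsArtinianRing E := IsArtinianRing.of_finite L E
  refine ⟨inferInstance, fun q _ => ?_⟩
  have hf : IsField (Localization.AtPrime q) := IsArtinianRing.isField_of_isReduced_of_isLocalRing _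
  exact ⟨hf.isDomain, hf.toField.instIsIntegrallyClosed⟩

lemma isIntegrallyClosedIn_of_smooth (P S L : Type*) [CommRing P] [IsDomain P] [IsIntegrallyClosed P] 
    [CommRing S] [Algebra P S] [Algebra.Smooth P S] [Field L] [Algebra P L] [IsFractionRing P L] :
    IsIntegrallyClosedIn S (S ⊗[P] L) := by
  rw [isIntegrallyClosedIn_iff]
  refine ⟨Algebra.TensorProduct.includeLeft_injective (S := P) (IsFractionRing.injective P L), ?_⟩
  intro x hx
  obtain ⟨z, hz⟩ := (TensorProduct.toIntegralClosure_bijective_of_smooth (R := P) (S := S) (B := L)).2 ⟨x, hx⟩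
  have hz' : x = (TensorProduct.toIntegralClosure P S L z).1 := by rw [hz]
  rw [hz']
  clear hz hz' hx
  induction z with
  | zero => exact ⟨0, by simp⟩
  | add y z hy hz =>
    obtain ⟨y', hy⟩ := hy
    obtain ⟨z', hz⟩ := hz
    exact ⟨y' + z', by rw [map_add, map_add, hy, hz]; rfl⟩
  | tmul s y =>
    obtain ⟨y, hy⟩ := y
    obtain ⟨p, rfl⟩ := (isIntegrallyClosed_iff L).1 ‹IsIntegrallyClosed P› hy
    refine ⟨p • s, ?_⟩
    change (p • s) ⊗ₜ[P] (1 : L) = s ⊗ₜ[P] (algebraMap P L p)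
    rw [TensorProduct.smul_tmul, Algebra.algebraMap_eq_smul_one]

lemma NRing.of_smooth (k D : Type*) [Field k] [CommRing D] [Algebra k D] [Algebra.Smooth k D] :
    NRing D := by
  apply NRing.of_cover
  intro q _
  obtain ⟨g, hg, n, _, _, _⟩ :=
      Algebra.IsSmoothAt.exists_isStandardEtale_mvPolynomial (R := k) (p := q)
  refine ⟨g, hg, ?_⟩
  let P := MvPolynomial (Fin n) k
  let L := FractionRing P
  let S := Localization.Away g
  have : Algebra.Etale P S := inferInstance
  obtain ⟨h1, h2⟩ := NRing.of_etale_field L (L ⊗[P] S)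
  let e : L ⊗[P] S ≃+* S ⊗[P] L := (Algebra.TensorProduct.comm P L S).toRingEquiv
  have h3 : IsNoetherianRing (S ⊗[P] L) := isNoetherianRing_of_ringEquiv _ e
  exact (h2.of_equiv e).of_isIntegrallyClosedIn (isIntegrallyClosedIn_of_smooth P S L)

lemma NRing.isReduced {D : Type*} [CommRing D] (h : NRing D) : IsReduced D := by
  apply isReduced_ofLocalizationMaximal
  intro p hp
  have := (h p).1
  infer_instance

end NS


section GR

variable {D E : Type*} [CommRing D] [CommRing E] [Algebra D E]

lemma gr_key (f : D) (hinj : Function.Injective (algebraMap D E))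
    (hfu : IsUnit (algebraMap D E f)) (J : Ideal D) (hrad : J.IsRadical) (hfJ : f ∈ J)
    (hcol : ∀ x, (∀ y ∈ J, x * y ∈ Ideal.span {f} * J) → x ∈ Ideal.span {f})
    (b : E) (hb : IsIntegral D b) (hJ : ∀ y ∈ J, ∃ d, algebraMap D E y * b = algebraMap D E d) :
    ∃ c, algebraMap D E c = b := by
  have h1 : ∀ y ∈ J, ∀ d, algebraMap D E y * b = algebraMap D E d → d ∈ J := by
    intro x hx d hd
    obtain ⟨p, hp, hp0⟩ := hb
    have h2 : Polynomial.aeval (algebraMap D E x * b) (p.scaleRoots x) = 0 :=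
      Polynomial.scaleRoots_aeval_eq_zero hp0
    have hq : (p.scaleRoots x).Monic := (Polynomial.monic_scaleRoots_iff x).2 hp
    rw [hd, Polynomial.aeval_algebraMap_apply, map_eq_zero_iff _ hinj, hq.as_sum] at h2
    simp only [map_add, map_sum, map_pow, map_mul, Polynomial.aeval_X, Polynomial.aeval_C,
      Polynomial.coeff_scaleRoots] at h2
    apply hrad ⟨(p.scaleRoots x).natDegree, ?_⟩
    rw [eq_neg_of_add_eq_zero_left h2]
    apply neg_mem
    apply sum_mem
    intro i hi
    rw [Finset.mem_range, Polynomial.natDegree_scaleRoots] at hi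
    apply Ideal.mul_mem_right
    apply Ideal.mul_mem_left
    exact Ideal.pow_mem_of_mem _ hx _ (by omega)
  obtain ⟨x, hx⟩ := hJ f hfJ
  have h2 : x ∈ Ideal.span {f} := by
    apply hcol
    intro y hy
    obtain ⟨d, hd⟩ := hJ y hy
    have : x * y = f * d := by
      apply hinj
      rw [map_mul, map_mul, ← hx, ← hd]; ring
    rw [this]
    exact Ideal.mul_mem_mul (Ideal.mem_span_singleton_self f) (h1 y hy d hd)
  obtain ⟨c, hc⟩ := Ideal.mem_span_singleton'.1 h2
  refine ⟨c, ?_⟩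
  apply hfu.mul_left_cancel
  rw [hx, ← map_mul, mul_comm, hc]

lemma grauert_remmert (f : D) [IsLocalization.Away f E] (hf : f ∈ nonZeroDivisors D) (J : Ideal D)
    (hrad : J.IsRadical) (hfJ : f ∈ J) (m : ℕ) (hm : J ^ m ≤ Ideal.span {f})
    (hcol : ∀ x, (∀ y ∈ J, x * y ∈ Ideal.span {f} * J) → x ∈ Ideal.span {f}) :
    IsIntegrallyClosedIn D E := by
  have hinj : Function.Injective (algebraMap D E) :=
    IsLocalization.injective E (M := Submonoid.powers f) (Submonoid.powers_le.2 hf)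
  have hfu : IsUnit (algebraMap D E f) := IsLocalization.Away.algebraMap_isUnit f
  rw [isIntegrallyClosedIn_iff]
  refine ⟨hinj, ?_⟩
  have key : ∀ N : ℕ, ∀ b : E, IsIntegral D b →
      (∀ y ∈ J ^ N, ∃ d, algebraMap D E y * b = algebraMap D E d) →
      ∃ c, algebraMap D E c = b := by
    intro N
    induction N with
    | zero =>
      intro b _ h
      obtain ⟨d, hd⟩ := h 1 (by simp)
      exact ⟨d, by rw [← hd]; simp⟩
    | succ N ih =>
      intro b hb h
      apply ih b hb
      intro y hy
      obtain ⟨c, hc⟩ := gr_key f hinj hfu J hrad hfJ hcol (algebraMap D E y * b)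
        (isIntegral_algebraMap.mul hb) (by
          intro x hx
          obtain ⟨d, hd⟩ := h (y * x) (by rw [pow_succ]; exact Ideal.mul_mem_mul hy hx)
          exact ⟨d, by rw [← hd, map_mul]; ring⟩)
      exact ⟨c, hc.symm⟩
  intro b hb
  obtain ⟨⟨d, _, n, rfl⟩, hd⟩ := IsLocalization.surj (Submonoid.powers f) b
  simp only at hd
  apply key (m * n) b hb
  intro y hy
  have : y ∈ Ideal.span {f ^ n} := by
    rw [← Ideal.span_singleton_pow]
    rw [pow_mul] at hy
    exact Ideal.pow_right_mono hm n hy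
  obtain ⟨c, rfl⟩ := Ideal.mem_span_singleton'.1 this
  exact ⟨c * d, by rw [map_mul, map_mul, mul_assoc, mul_comm _ b, hd]⟩

end GR


section AF

/-- A property holds for all field-valued points of a nonempty basic open. -/
def Gen (A : Type u) [CommRing A] (P : ∀ (k : Type u) [Field k] [Algebra A k], Prop) : Prop :=
  ∃ a : A, a ≠ 0 ∧ ∀ (k : Type u) [Field k] [Algebra A k], algebraMap A k a ≠ 0 → P k

variable {A : Type u} [CommRing A]

lemma Gen.and [IsDomain A] {P Q : ∀ (k : Type u) [Field k] [Algebra A k], Prop} (h1 : Gen A P)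
    (h2 : Gen A Q) : Gen A (fun k _ _ => P k ∧ Q k) := by
  obtain ⟨a, ha, h1⟩ := h1
  obtain ⟨b, hb, h2⟩ := h2
  refine ⟨a * b, mul_ne_zero ha hb, fun k _ _ hk => ?_⟩
  rw [map_mul] at hk
  exact ⟨h1 k (left_ne_zero_of_mul hk), h2 k (right_ne_zero_of_mul hk)⟩

lemma Gen.mono {P Q : ∀ (k : Type u) [Field k] [Algebra A k], Prop} (h1 : Gen A P)
    (h : ∀ (k : Type u) [Field k] [Algebra A k], P k → Q k) : Gen A Q := by
  obtain ⟨a, ha, h1⟩ := h1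
  exact ⟨a, ha, fun k _ _ hk => h k (h1 k hk)⟩

lemma Gen.all [IsDomain A] {ι : Type*} [Finite ι]
    {P : ι → ∀ (k : Type u) [Field k] [Algebra A k], Prop} (h : ∀ i, Gen A (P i)) :
    Gen A (fun k _ _ => ∀ i, P i k) := by
  have := Fintype.ofFinite ι
  choose a ha h using h
  refine ⟨∏ i, a i, Finset.prod_ne_zero_iff.2 fun i _ => ha i, fun k _ _ hk i => h i k ?_⟩
  rw [map_prod] at hk
  exact Finset.prod_ne_zero_iff.1 hk i (Finset.mem_univ i)

lemma gen_subsingleton {C : Type u} [CommRing C] [Algebra A C]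
    (h : ¬ Function.Injective (algebraMap A C)) : Gen A (fun k _ _ => Subsingleton (k ⊗[A] C)) := by
  rw [injective_iff_map_eq_zero] at h
  push Not at h
  obtain ⟨a, ha, h0⟩ := h
  refine ⟨a, h0, fun k _ _ hk => ?_⟩
  apply subsingleton_of_zero_eq_one
  have : (1 : k ⊗[A] C) = ((algebraMap A k a)⁻¹ * algebraMap A k a) ⊗ₜ 1 := by
    rw [inv_mul_cancel₀ hk]; rfl
  rw [this, mul_comm, ← Algebra.smul_def, TensorProduct.smul_tmul, Algebra.smul_def, ha, zero_mul, tmul_zero]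

lemma smooth_away {B : Type u} [CommRing B] [Algebra A B] (f : B)
    [Algebra.Smooth A (Localization.Away f)] (k : Type u) [Field k] [Algebra A k] :
    Algebra.Smooth k (Localization.Away ((1 : k) ⊗ₜ[A] f)) :=
  Algebra.Smooth.of_equiv (IsLocalization.Away.tensorProductEquivTMulRight A k f (Localization.Away f))

variable [IsDomain A] [IsNoetherianRing A]

lemma gen_nzd {B : Type u} [CommRing B] [Algebra A B] [Algebra.FiniteType A B] (f : B)
    (hf : ∀ x, x * f = 0 → x = 0) :
    Gen A (fun k _ _ => ((1 : k) ⊗ₜ[A] f) ∈ nonZeroDivisors (k ⊗[A] B)) := by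
  obtain ⟨a, ha, h⟩ := generic_colon (A := A) (ι := PUnit.{u+1}) (⊥ : Ideal B) (fun _ => ⊥) (fun _ => f)
    (fun x => by
      simp only [Ideal.mem_bot, forall_const]
      exact ⟨fun h => by rw [h, zero_mul], hf x⟩)
  refine ⟨a, ha, fun k _ _ hk => ?_⟩
  refine mem_nonZeroDivisors_iff_right.2 ?_
  intro x hx
  have := h k hk x (fun i => by rw [hx]; exact zero_mem _)
  rwa [Ideal.map_bot, Ideal.mem_bot] at this

lemma gen_reduced [CharZero A] {C : Type u} [CommRing C] [IsDomain C] [Algebra A C]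
    [Algebra.FiniteType A C] : Gen A (fun k _ _ => IsReduced (k ⊗[A] C)) := by
  by_cases hinj : Function.Injective (algebraMap A C)
  · obtain ⟨f, hf, _⟩ := generic_smooth hinj
    refine (gen_nzd (A := A) f (fun x hx => (mul_eq_zero.1 hx).resolve_right hf)).mono ?_
    intro k _ _ hk
    have := smooth_away (A := A) f k
    have h1 := (NRing.of_smooth k (Localization.Away ((1 : k) ⊗ₜ[A] f))).isReduced
    exact isReduced_of_injective _ (IsLocalization.injective (Localization.Away ((1 : k) ⊗ₜ[A] f))
      (M := Submonoid.powers ((1 : k) ⊗ₜ[A] f)) (Submonoid.powers_le.2 hk))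
  · exact (gen_subsingleton hinj).mono fun k _ _ h => inferInstance

lemma gen_radical [CharZero A] {B : Type u} [CommRing B] [Algebra A B]
    [Algebra.FiniteType A B] (J : Ideal B) (hJ : J.IsRadical) :
    Gen A (fun k _ _ =>
      (J.map (Algebra.TensorProduct.includeRight : B →ₐ[A] k ⊗[A] B)).IsRadical) := by
  have : IsNoetherianRing B := Algebra.FiniteType.isNoetherianRing A B
  have hfin : Finite J.minimalPrimes := J.finite_minimalPrimes_of_isNoetherianRing
  have h1 : Gen A (fun k _ _ => ∀ q : J.minimalPrimes, IsReduced (k ⊗[A] (B ⧸ q.1))) := by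
    apply Gen.all
    intro q
    have : q.1.IsPrime := q.2.1.1
    exact gen_reduced
  have h2 := generic_colon (A := A) J (fun q : J.minimalPrimes => q.1) (fun _ => 1) (fun x => by
    simp only [mul_one]
    conv_lhs => rw [← hJ.radical, ← Ideal.sInf_minimalPrimes]
    rw [Ideal.mem_sInf]
    exact ⟨fun h q => h q.2, fun h q hq => h ⟨q, hq⟩⟩)
  refine (h1.and h2).mono ?_
  intro k _ _ ⟨hr, hc⟩ x hx
  obtain ⟨n, hn⟩ := hx
  apply hc
  intro q
  have := hr q
  rw [show ((1 : k) ⊗ₜ[A] (1 : B)) = 1 from rfl, mul_one]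
  have hle := Ideal.map_mono (f := (Algebra.TensorProduct.includeRight : B →ₐ[A] k ⊗[A] B)) q.2.1.2
  have h3 := hle hn
  rw [← ker_baseChange_mk, RingHom.mem_ker] at h3 ⊢
  rw [map_pow] at h3
  exact eq_zero_of_pow_eq_zero h3

lemma normal_colon {B : Type u} [CommRing B] [IsDomain B] [IsIntegrallyClosed B] (f : B) (hf : f ≠ 0)
    (J : Ideal B) (hfJ : f ∈ J) (hfg : J.FG) (x : B) (h : ∀ y ∈ J, x * y ∈ Ideal.span {f} * J) :
    x ∈ Ideal.span {f} := by
  let K := FractionRing B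
  let N : Submodule B K := Submodule.map (Algebra.linearMap B K) J
  have hfK : algebraMap B K f ≠ 0 := by
    rwa [Ne, map_eq_zero_iff _ (IsFractionRing.injective B K)]
  have hN : N ≠ ⊥ := by
    intro h0
    have : algebraMap B K f ∈ N := ⟨f, hfJ, rfl⟩
    rw [h0, Submodule.mem_bot] at this
    exact hfK this
  have hint : IsIntegral B (algebraMap B K x / algebraMap B K f) := by
    refine isIntegral_of_smul_mem_submodule N hN (Submodule.FG.map _ hfg) _ ?_
    rintro _ ⟨y, hy, rfl⟩
    obtain ⟨z, hz, hz'⟩ := Ideal.mem_span_singleton_mul.1 (h y hy)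
    refine ⟨z, hz, ?_⟩
    simp only [Algebra.linearMap_apply, smul_eq_mul]
    rw [div_mul_eq_mul_div, ← map_mul, ← hz', map_mul, mul_div_cancel_left₀ _ hfK]
  obtain ⟨c, hc⟩ := (isIntegrallyClosed_iff K).1 ‹_› hint
  rw [Ideal.mem_span_singleton']
  refine ⟨c, ?_⟩
  apply IsFractionRing.injective B K
  rw [map_mul, hc, div_mul_cancel₀ _ hfK]

theorem gen_normal [CharZero A] {B : Type u} [CommRing B] [IsDomain B] [IsIntegrallyClosed B]
    [Algebra A B] [Algebra.FiniteType A B] : Gen A (fun k _ _ => NRing (k ⊗[A] B)) := by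
  by_cases hinj : Function.Injective (algebraMap A B)
  swap
  · refine (gen_subsingleton hinj).mono fun k _ _ h q hq => ?_
    exact absurd (Subsingleton.elim q ⊤) hq.ne_top
  have : IsNoetherianRing B := Algebra.FiniteType.isNoetherianRing A B
  obtain ⟨f, hf, _⟩ := generic_smooth hinj
  let J := (Ideal.span {f}).radical
  have hfJ : f ∈ J := Ideal.le_radical (Ideal.mem_span_singleton_self f)
  have hJfg : J.FG := IsNoetherian.noetherian J
  obtain ⟨m, hm⟩ := Ideal.exists_radical_pow_le_of_fg (Ideal.span {f}) hJfg
  obtain ⟨s, hs⟩ := id hJfg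
  have h1 := gen_nzd (A := A) f (fun x hx => (mul_eq_zero.1 hx).resolve_right hf)
  have h2 := gen_radical (A := A) J (Ideal.radical_isRadical _)
  have h3 := generic_colon (A := A) (Ideal.span {f}) (fun _ : s => Ideal.span {f} * J) (fun i => i.1) (fun x => by
    constructor
    · intro hx i
      exact Ideal.mul_mem_mul hx (hs ▸ Ideal.subset_span i.2)
    · intro hx
      apply normal_colon f hf J hfJ hJfg
      intro y hy
      rw [← hs] at hy
      refine Submodule.span_induction (p := fun y _ => x * y ∈ Ideal.span {f} * J) ?_ ?_ ?_ ?_ hy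
      · intro y hy
        exact hx ⟨y, hy⟩
      · rw [mul_zero]; exact zero_mem _
      · intro y z _ _ hy hz
        rw [mul_add]; exact add_mem hy hz
      · intro c y _ hy
        rw [smul_eq_mul, mul_left_comm]; exact Ideal.mul_mem_left _ _ hy)
  refine (h1.and (h2.and h3)).mono ?_
  intro k _ _ ⟨g1, g2, g3⟩
  have := smooth_away (A := A) f k
  let F : k ⊗[A] B := (1 : k) ⊗ₜ[A] f
  let E := Localization.Away F
  have hE : NRing E := NRing.of_smooth k E
  have hspan : (Ideal.span {f}).map (Algebra.TensorProduct.includeRight : B →ₐ[A] k ⊗[A] B) =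
      Ideal.span {F} := by
    rw [Ideal.map_span, Set.image_singleton]; rfl
  have : IsNoetherianRing (k ⊗[A] B) := Algebra.FiniteType.isNoetherianRing k _
  have : IsNoetherianRing E := IsLocalization.isNoetherianRing (Submonoid.powers F) E inferInstance
  refine hE.of_isIntegrallyClosedIn (grauert_remmert F g1 _ g2
    (Ideal.mem_map_of_mem _ hfJ) m ?_ ?_)
  · rw [← Ideal.map_pow, ← hspan]
    exact Ideal.map_mono hm
  · intro x hx
    rw [← hspan]
    apply g3
    intro i
    rw [Ideal.map_mul, hspan]
    exact hx _ (Ideal.mem_map_of_mem _ (hs ▸ Ideal.subset_span i.2))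

end AF


theorem stalk_spec_good_aux (R : Type u) [CommRing R] (h : NRing R) (z : PrimeSpectrum R) :
    IsDomain ((Spec.structureSheaf R).presheaf.stalk z) ∧
      IsIntegrallyClosed ((Spec.structureSheaf R).presheaf.stalk z) := by
  obtain ⟨h1, h2⟩ := h z.asIdeal
  let e : Localization.AtPrime z.asIdeal ≃+* (Spec.structureSheaf R).presheaf.stalk z :=
    (IsLocalization.algEquiv z.asIdeal.primeCompl (Localization.AtPrime z.asIdeal)
      ((Spec.structureSheaf R).presheaf.stalk z)).toRingEquiv
  exact ⟨e.symm.toMulEquiv.isDomain, IsIntegrallyClosed.of_equiv e⟩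

theorem stalk_spec_good {R : CommRingCat.{u}} (h : NRing R) (z : Spec R) :
    IsDomain ((Spec R).presheaf.stalk z) ∧ IsIntegrallyClosed ((Spec R).presheaf.stalk z) :=
  stalk_spec_good_aux R h z

theorem stalk_good {Y : Scheme.{u}} {R : CommRingCat.{u}} (f : Spec R ⟶ Y) [IsOpenImmersion f]
    (h : NRing R) (z : Spec R) :
    IsDomain (Y.presheaf.stalk (f z)) ∧ IsIntegrallyClosed (Y.presheaf.stalk (f z)) := by
  obtain ⟨h1, h2⟩ := stalk_spec_good h z
  let e := (asIso (f.stalkMap z)).commRingCatIsoToRingEquiv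
  exact ⟨e.toMulEquiv.isDomain, IsIntegrallyClosed.of_equiv e.symm⟩

theorem affine_intClosed {W : Scheme.{u}} (hW : ∀ x : W, IsIntegrallyClosed (W.presheaf.stalk x))
    {U : W.Opens} (hU : IsAffineOpen U) [IsDomain Γ(W, U)] : IsIntegrallyClosed Γ(W, U) := by
  refine IsIntegrallyClosed.of_localization_maximal fun p hp0 hp => ?_
  let y : PrimeSpectrum Γ(W, U) := ⟨p, hp.isPrime⟩
  have hy : hU.fromSpec y ∈ U := by
    have : hU.fromSpec y ∈ Set.range hU.fromSpec := ⟨y, rfl⟩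
    rwa [hU.range_fromSpec] at this
  have := hW (hU.fromSpec y)
  letI := TopCat.Presheaf.algebra_section_stalk W.presheaf ⟨hU.fromSpec y, hy⟩
  have hl : IsLocalization.AtPrime (W.presheaf.stalk (hU.fromSpec y)) y.asIdeal :=
    hU.isLocalization_stalk' y hy
  exact IsIntegrallyClosed.of_equiv
    (IsLocalization.algEquiv y.asIdeal.primeCompl (W.presheaf.stalk (hU.fromSpec y))
      (Localization.AtPrime y.asIdeal)).toRingEquiv

theorem fromSpecResidueField_factor {T : Scheme.{u}} {V : T.Opens} (hV : IsAffineOpen V) (t : T)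
    (ht : t ∈ V) : Spec.map (T.evaluation V t ht) ≫ hV.fromSpec = T.fromSpecResidueField t := by
  rw [Scheme.fromSpecResidueField, ← hV.fromSpecStalk_eq_fromSpecStalk ht, IsAffineOpen.fromSpecStalk,
    ← Scheme.germ_residue, Spec.map_comp, Category.assoc]

theorem NRing.of_subsingleton' {D : Type*} [CommRing D] [Subsingleton D] : NRing D := by
  intro q hq
  exact absurd (Subsingleton.elim _ _) hq.ne_top

theorem fibre_chart {W T : Scheme.{u}} (h : W ⟶ T) {V : T.Opens} (hV : IsAffineOpen V)
    {V' : W.Opens} (hV' : IsAffineOpen V') (e : V' ≤ h ⁻¹ᵁ V) (t : T) (ht : t ∈ V)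
    (hn : letI := (h.appLE V V' e).hom.toAlgebra
      letI := (T.evaluation V t ht).hom.toAlgebra
      NRing ((T.residueField t) ⊗[Γ(T, V)] Γ(W, V')))
    (x : ↥(pullback h (T.fromSpecResidueField t)))
    (hx : pullback.fst h (T.fromSpecResidueField t) x ∈ V') :
    IsDomain ((pullback h (T.fromSpecResidueField t)).presheaf.stalk x) ∧
      IsIntegrallyClosed ((pullback h (T.fromSpecResidueField t)).presheaf.stalk x) := by
  letI := (h.appLE V V' e).hom.toAlgebra
  letI := (T.evaluation V t ht).hom.toAlgebra
  have hn' : NRing (CommRingCat.of (Γ(W, V') ⊗[Γ(T, V)] (T.residueField t))) :=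
    NRing.of_equiv hn (Algebra.TensorProduct.comm _ _ _).toRingEquiv
  let m := pullback.map (Spec.map (CommRingCat.ofHom (algebraMap Γ(T, V) Γ(W, V'))))
    (Spec.map (CommRingCat.ofHom (algebraMap Γ(T, V) (T.residueField t)))) h
    (T.fromSpecResidueField t) hV'.fromSpec (𝟙 _) hV.fromSpec
    (IsAffineOpen.SpecMap_appLE_fromSpec h hV hV' e)
    ((fromSpecResidueField_factor hV t ht).trans (Category.id_comp _).symm)
  have hm : x ∈ Set.range m := by
    rw [Scheme.Pullback.range_map]
    refine ⟨?_, ?_⟩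
    · rw [hV'.range_fromSpec]; exact hx
    · exact ⟨_, rfl⟩
  obtain ⟨z, rfl⟩ := hm
  have := stalk_good ((pullbackSpecIso Γ(T, V) Γ(W, V') (T.residueField t)).inv ≫ m) hn'
    ((pullbackSpecIso Γ(T, V) Γ(W, V') (T.residueField t)).hom z)
  have hz : ((pullbackSpecIso Γ(T, V) Γ(W, V') (T.residueField t)).inv ≫ m)
    ((pullbackSpecIso Γ(T, V) Γ(W, V') (T.residueField t)).hom z) = m z := by
    rw [← Scheme.Hom.comp_apply, Iso.hom_inv_id_assoc]
  rwa [hz] at this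

theorem gen_chart {W T : Scheme.{u}} (h : W ⟶ T) [IsIntegral W] [IsIntegral T]
    [LocallyOfFiniteType h] (hW : ∀ x : W, IsIntegrallyClosed (W.presheaf.stalk x))
    {V : T.Opens} (hV : IsAffineOpen V) [Nonempty V] [IsNoetherianRing Γ(T, V)] [CharZero Γ(T, V)]
    {V' : W.Opens} (hV' : IsAffineOpen V') (e : V' ≤ h ⁻¹ᵁ V) :
    Gen Γ(T, V) (fun k _ _ => letI := (h.appLE V V' e).hom.toAlgebra
      NRing (k ⊗[Γ(T, V)] Γ(W, V'))) := by
  letI := (h.appLE V V' e).hom.toAlgebra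
  by_cases hne : Nonempty V'
  · haveI := affine_intClosed hW hV'
    haveI : Algebra.FiniteType Γ(T, V) Γ(W, V') := h.finiteType_appLE hV hV' e
    exact gen_normal
  · have : V' = ⊥ := by
      ext x; simp; intro hx; exact hne ⟨⟨x, hx⟩⟩
    haveI : Subsingleton Γ(W, V') := by subst this; infer_instance
    refine ⟨1, one_ne_zero, fun k _ _ _ => ?_⟩
    haveI : Subsingleton (k ⊗[Γ(T, V)] Γ(W, V')) := by
      refine subsingleton_of_zero_eq_one ?_
      rw [Algebra.TensorProduct.one_def, Subsingleton.elim (1 : Γ(W, V')) 0, TensorProduct.tmul_zero]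
    exact NRing.of_subsingleton'

theorem section_ring {T : Scheme.{0}} (f : T ⟶ Spec (CommRingCat.of ℂ)) [LocallyOfFiniteType f]
    {V : T.Opens} (hV : IsAffineOpen V) [Nontrivial Γ(T, V)] :
    IsNoetherianRing Γ(T, V) ∧ CharZero Γ(T, V) := by
  have h1 := f.finiteType_appLE (isAffineOpen_top _) hV le_top
  let e : ℂ ≃+* Γ(Spec (CommRingCat.of ℂ), ⊤) :=
    (Scheme.ΓSpecIso (CommRingCat.of ℂ)).commRingCatIsoToRingEquiv.symm
  let g : ℂ →+* Γ(T, V) := (f.appLE ⊤ V le_top).hom.comp (e : ℂ →+* _)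
  haveI : IsNoetherianRing Γ(Spec (CommRingCat.of ℂ), ⊤) := isNoetherianRing_of_ringEquiv ℂ e
  refine ⟨?_, charZero_of_injective_ringHom g.injective⟩
  letI := (f.appLE ⊤ V le_top).hom.toAlgebra
  haveI : Algebra.FiniteType Γ(Spec (CommRingCat.of ℂ), ⊤) Γ(T, V) := h1
  exact Algebra.FiniteType.isNoetherianRing Γ(Spec (CommRingCat.of ℂ), ⊤) _

/-- **(General fibres of a morphism from a normal variety are normal.)**  Let
`h : W → T` be a morphism of irreducible varieties over `ℂ` (integral, separated schemes
of finite type over `ℂ`) with `W` normal.  Then a general fibre of `h` is normal: there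
is a dense open subset `U ⊆ T` such that for every `t ∈ U` the (scheme-theoretic) fibre
`h⁻¹(t) = W ×_T Spec κ(t)` is a normal scheme. -/
theorem generic_fibre_of_normal_is_normal
    (W T : Scheme) (h : W ⟶ T)
    (fW : W ⟶ Spec (CommRingCat.of ℂ)) (fT : T ⟶ Spec (CommRingCat.of ℂ))
    (hcomm : h ≫ fT = fW)
    [IsIntegral W] [IsIntegral T]
    [LocallyOfFiniteType fW] [QuasiCompact fW] [IsSeparated fW]
    [LocallyOfFiniteType fT] [QuasiCompact fT] [IsSeparated fT]
    (hWnormal : IsNormalScheme W) :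
    ∃ U : Set T, IsOpen U ∧ Dense U ∧
      ∀ t : T, t ∈ U → IsNormalScheme (pullback h (T.fromSpecResidueField t)) := by
  subst hcomm
  haveI : LocallyOfFiniteType h := locallyOfFiniteType_of_comp h fT
  haveI : QuasiCompact h := QuasiCompact.of_comp h fT
  obtain ⟨t0⟩ : Nonempty T := inferInstance
  obtain ⟨V, hV, ht0, -⟩ := exists_isAffineOpen_mem_and_subset (x := t0) (U := ⊤) trivial
  haveI : Nonempty V := ⟨⟨t0, ht0⟩⟩
  obtain ⟨hN, hC⟩ := section_ring fT hV
  have hcpt : IsCompact (X := W) (h ⁻¹ᵁ V) := QuasiCompact.isCompact_preimage _ V.2 hV.isCompact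
  obtain ⟨s, hs, hsV⟩ := isCompact_iff_finite_and_eq_biUnion_affineOpens.1 hcpt
  haveI := hs.to_subtype
  have hle : ∀ i : s, (i.1 : W.Opens) ≤ h ⁻¹ᵁ V := fun i => by
    rw [hsV]; exact le_iSup₂_of_le i.1 i.2 le_rfl
  obtain ⟨a, ha, hk⟩ := Gen.all fun i : s =>
    gen_chart h (fun x => (hWnormal x).2) hV i.1.2 (hle i)
  refine ⟨T.basicOpen a, (T.basicOpen a).2, (T.basicOpen a).2.dense ?_, fun t ht x => ?_⟩
  · rw [Set.nonempty_iff_ne_empty]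
    intro hE
    apply ha
    rw [← basicOpen_eq_bot_iff]
    exact SetLike.coe_injective hE
  · have htV : t ∈ V := T.basicOpen_le a ht
    have hx : pullback.fst h (T.fromSpecResidueField t) x ∈ h ⁻¹ᵁ V := by
      show h (pullback.fst h (T.fromSpecResidueField t) x) ∈ V
      rw [← Scheme.Hom.comp_apply, pullback.condition, Scheme.Hom.comp_apply,
        Scheme.fromSpecResidueField_apply]
      exact htV
    rw [hsV] at hx
    simp only [TopologicalSpace.Opens.mem_iSup] at hx
    obtain ⟨i, his, hxi⟩ := hx
    letI := (T.evaluation V t htV).hom.toAlgebra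
    exact fibre_chart h hV i.2 (hle ⟨i, his⟩) t htV
      (hk (T.residueField t) ((Scheme.evaluation_ne_zero_iff_mem_basicOpen T t htV a).2 ht) ⟨i, his⟩)
      x hxi

end
end

section
/- Let Y ⊆ ℙ^r (over ℂ) be an irreducible, non-projectable m-dimensional subvariety with 2m ≥ r. Then f(π^{-1}(E_Y)) = ℙ^r, i.e. the union of the embedded tangent lines of Y (the limits of secant lines at coincident pairs of points) is all of ℙ^r. (This is a consequence of the Fulton–Hansen connectedness theorem.) -/
/- Background for [Lopez-Ran, "On the irreducibility of secant cones, and an application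
to linear normality"]: a concrete model of complex projective geometry.  Projective space
`ℙ^r(ℂ)` is the projectivization of `ℂ^{r+1}`, equipped with the Zariski topology;
subvarieties are (closed, irreducible) subsets; tangent spaces, smoothness, the invariant
`σ(Y)`, secant varieties/cones, generic linear projections and their double loci, and
linear normality are all defined from first principles below. -/

open MvPolynomial Set

noncomputable section

/-- Complex projective space of lines in `ℂⁿ` (so of projective dimension `n - 1`). -/
abbrev PrV (n : ℕ) : Type := Projectivization ℂ (Fin n → ℂ)

/-- `ℙ^r` over `ℂ`. -/
abbrev Pr (r : ℕ) : Type := PrV (r + 1)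

/-- The vanishing locus in projective space of a polynomial, defined via all nonzero lifts
(for a homogeneous polynomial this is the usual projective zero locus). -/
def pZero {n : ℕ} (f : MvPolynomial (Fin n) ℂ) : Set (PrV n) :=
  {x | ∀ v : Fin n → ℂ, ∀ hv : v ≠ 0, Projectivization.mk ℂ v hv = x → eval v f = 0}

/-- The Zariski topology on complex projective space. -/
instance prTop (n : ℕ) : TopologicalSpace (PrV n) :=
  TopologicalSpace.generateFrom {U | ∃ f : MvPolynomial (Fin n) ℂ, U = (pZero f)ᶜ}

/-- The Zariski topology on the affine space `ℂ^σ`. -/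
def affTop (σ : Type) : TopologicalSpace (σ → ℂ) :=
  TopologicalSpace.generateFrom {U | ∃ f : MvPolynomial σ ℂ, U = {v | eval v f ≠ 0}}

/-- A property holds generically (on a dense Zariski-open set) on the affine space `ℂ^σ`. -/
def GenericAff {σ : Type} (P : (σ → ℂ) → Prop) : Prop :=
  ∃ U : Set (σ → ℂ), @IsOpen _ (affTop σ) U ∧ @Dense _ (affTop σ) U ∧ ∀ v ∈ U, P v

/-- The projective line through two points (their linear span); for `x = y` this is `{x}`. -/
def lineThrough {n : ℕ} (x y : PrV n) : Set (PrV n) :=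
  {z | z.rep ∈ Submodule.span ℂ ({x.rep, y.rep} : Set (Fin n → ℂ))}

/-- The projective linear subspace associated to a linear subspace `W ⊆ ℂⁿ`. -/
def projSub {n : ℕ} (W : Submodule ℂ (Fin n → ℂ)) : Set (PrV n) := {x | x.rep ∈ W}

/-- The secant variety of `Y`: the (closure of the) union of all lines spanned by pairs of
distinct points of `Y`, i.e. the union of all secant lines of `Y`. -/
def secantVariety {n : ℕ} (Y : Set (PrV n)) : Set (PrV n) :=
  closure (⋃ x ∈ Y, ⋃ y ∈ Y, ⋃ _ : x ≠ y, lineThrough x y)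

/-- `Y` is projectable if its secant variety is not all of projective space. -/
def Projectable {n : ℕ} (Y : Set (PrV n)) : Prop := secantVariety Y ≠ Set.univ

/-- Hyperplanes in projective space. -/
def IsHyperplane {n : ℕ} (H : Set (PrV n)) : Prop :=
  ∃ φ : (Fin n → ℂ) →ₗ[ℂ] ℂ, φ ≠ 0 ∧ H = {x | φ x.rep = 0}

/-- A set in projective space is nondegenerate if it is contained in no hyperplane. -/
def NondegenerateSet {n : ℕ} (Y : Set (PrV n)) : Prop :=
  ∀ H : Set (PrV n), IsHyperplane H → ¬ Y ⊆ H

/-- Dimension of a subset of projective space: the Krull dimension of the subspace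
topology. -/
def pdim {n : ℕ} (S : Set (PrV n)) : WithBot ℕ∞ := topologicalKrullDim S

/-- The homogeneous ideal of `Y` (as a set): all polynomials all of whose lifts vanish on
the affine cone of `Y`. -/
def homIdeal {n : ℕ} (Y : Set (PrV n)) : Set (MvPolynomial (Fin n) ℂ) := {f | Y ⊆ pZero f}

/-- The differential of a polynomial at a point of `ℂⁿ`, as a linear form. -/
def jacLin {n : ℕ} (f : MvPolynomial (Fin n) ℂ) (v : Fin n → ℂ) : (Fin n → ℂ) →ₗ[ℂ] ℂ :=
  ∑ i, eval v (pderiv i f) • LinearMap.proj i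

/-- The affine tangent space of the cone over `Y` at `v`: the common kernel of the
differentials of all elements of the homogeneous ideal of `Y`. -/
def affTangent {n : ℕ} (Y : Set (PrV n)) (v : Fin n → ℂ) : Submodule ℂ (Fin n → ℂ) :=
  ⨅ f ∈ homIdeal Y, LinearMap.ker (jacLin f v)

/-- The embedded projective tangent space `T_x Y ⊆ ℙⁿ⁻¹`. -/
def projTangent {n : ℕ} (Y : Set (PrV n)) (x : PrV n) : Set (PrV n) :=
  projSub (affTangent Y x.rep)

/-- `x` is a smooth point of `Y` if the affine tangent space of the cone has the expected
dimension `dim Y + 1`. -/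
def IsSmoothPt {n : ℕ} (Y : Set (PrV n)) (x : PrV n) : Prop :=
  ((Module.finrank ℂ (affTangent Y x.rep) : ℕ∞) : WithBot ℕ∞) = pdim Y + 1

/-- The smooth locus `Y_smooth` of `Y`. -/
def smoothLocus {n : ℕ} (Y : Set (PrV n)) : Set (PrV n) := {x ∈ Y | IsSmoothPt Y x}

/-- The singular locus of `Y`. -/
def singLocus {n : ℕ} (Y : Set (PrV n)) : Set (PrV n) := Y \ smoothLocus Y

/-- `Y` is smooth if every point of `Y` is a smooth point. -/
def IsSmoothSet {n : ℕ} (Y : Set (PrV n)) : Prop := ∀ x ∈ Y, IsSmoothPt Y x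

/-- A divisor on `Y`: an irreducible closed subvariety of `Y` of codimension one. -/
def IsDivisorOn {n : ℕ} (W Y : Set (PrV n)) : Prop :=
  W ⊆ Y ∧ IsIrreducible W ∧ closure W ∩ Y = W ∧ pdim W + 1 = pdim Y

/-- `σ(Y)`: the maximal dimension of a subvariety `Z` of the smooth locus of `Y` which
contains a generic point of some divisor on `Y` (i.e. is dense in some divisor), and such
that all embedded tangent spaces `T_y Y`, `y ∈ Z`, lie in a fixed hyperplane. -/
def sigmaY {n : ℕ} (Y : Set (PrV n)) : WithBot ℕ∞ :=
  sSup { d | ∃ Z : Set (PrV n), Z ⊆ smoothLocus Y ∧ IsIrreducible Z ∧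
      (∃ W, IsDivisorOn W Y ∧ W ⊆ closure (Z ∩ W)) ∧
      (∃ H, IsHyperplane H ∧ ∀ y ∈ Z, projTangent Y y ⊆ H) ∧ pdim Z = d }

/-- The ideal of polynomials vanishing (in all lifts) on the affine cone over `Y`. -/
def idealOf {n : ℕ} (Y : Set (PrV n)) : Ideal (MvPolynomial (Fin n) ℂ) where
  carrier := homIdeal Y
  add_mem' := by
    intro f g hf hg x hx v hv hvx
    have h1 := hf hx v hv hvx
    have h2 := hg hx v hv hvx
    simp [map_add, h1, h2]
  zero_mem' := by intro x hx v hv hvx; simp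
  smul_mem' := by
    intro c f hf x hx v hv hvx
    have h1 := hf hx v hv hvx
    simp [smul_eq_mul, map_mul, h1]

instance kerEvalPrime {n : ℕ} (v : Fin n → ℂ) :
    (RingHom.ker ((aeval v : MvPolynomial (Fin n) ℂ →ₐ[ℂ] ℂ) :
      MvPolynomial (Fin n) ℂ →+* ℂ)).IsPrime :=
  RingHom.ker_isPrime _

/-- The local ring of the affine space `ℂⁿ` at the point `v`. -/
abbrev polyAtPoint {n : ℕ} (v : Fin n → ℂ) : Type :=
  Localization.AtPrime (RingHom.ker ((aeval v : MvPolynomial (Fin n) ℂ →ₐ[ℂ] ℂ) :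
    MvPolynomial (Fin n) ℂ →+* ℂ))

/-- The local ring of the affine cone over `Y` at a (nonzero) point `v` of the cone. -/
abbrev coneLocalRing {n : ℕ} (Y : Set (PrV n)) (v : Fin n → ℂ) : Type :=
  polyAtPoint v ⧸
    (Ideal.map (algebraMap (MvPolynomial (Fin n) ℂ) (polyAtPoint v)) (idealOf Y))

/-- A normal (irreducible, closed) subvariety of projective space: all local rings of its
affine cone at points of the punctured cone are integrally closed domains. -/
def IsNormalVariety {n : ℕ} (Y : Set (PrV n)) : Prop :=
  IsClosed Y ∧ IsIrreducible Y ∧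
    ∀ x ∈ Y, IsDomain (coneLocalRing Y x.rep) ∧ IsIntegrallyClosed (coneLocalRing Y x.rep)

/-- The scheme-theoretic double locus of the projection of `Y` away from the projective
linear subspace `ℙ(W)`: points `y ∈ Y` such that the fibre of the projection through `y`
(the span of `ℙ(W)` and `y`) meets `Y` in a subscheme different from the single reduced
point `y`: either it contains a second point of `Y`, or it is tangent to `Y` at `y`. -/
def doubleLocus {r : ℕ} (Y : Set (Pr r)) (W : Submodule ℂ (Fin (r+1) → ℂ)) : Set (Pr r) :=
  {y | y ∈ Y ∧
    ((∃ y' ∈ Y, y' ≠ y ∧ y'.rep ∈ W ⊔ Submodule.span ℂ {y.rep}) ∨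
      affTangent Y y.rep ⊓ (W ⊔ Submodule.span ℂ {y.rep}) ≠ Submodule.span ℂ {y.rep})}

/-- The linear subspace spanned by a `(k+1)`-tuple of vectors of `ℂ^{r+1}` (used to
parametrize generic linear subspaces of projective dimension `k`). -/
def spanOfTuple {r k : ℕ} (v : Fin (k+1) × Fin (r+1) → ℂ) :
    Submodule ℂ (Fin (r+1) → ℂ) :=
  Submodule.span ℂ (Set.range fun i : Fin (k+1) => fun j => v (i, j))

/-- The secant cone of `Y` at `z`: the closure of the union of all secant lines of `Y`
passing through `z`. -/
def secantCone {r : ℕ} (Y : Set (Pr r)) (z : Pr r) : Set (Pr r) :=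
  closure (⋃ x ∈ Y, ⋃ y ∈ Y, ⋃ _ : x ≠ y, ⋃ _ : z ∈ lineThrough x y, lineThrough x y)

/-- `Y` has the irreducible secant cone (ISC) property: the secant cone of `Y` at a generic
point of `ℙ^r` (equivalently, the generic fibre of `f : I_Y → ℙ^r`) is irreducible. -/
def ISC {r : ℕ} (Y : Set (Pr r)) : Prop :=
  ∃ U : Set (Pr r), IsOpen U ∧ Dense U ∧ ∀ z ∈ U, IsIrreducible (secantCone Y z)

/-- The outer (Segre) product of two vectors. -/
def outerVec {a b : ℕ} (v : Fin a → ℂ) (w : Fin b → ℂ) : Fin (a * b) → ℂ :=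
  fun k => v (finProdFinEquiv.symm k).1 * w (finProdFinEquiv.symm k).2

lemma outerVec_ne_zero {a b : ℕ} {v : Fin a → ℂ} {w : Fin b → ℂ}
    (hv : v ≠ 0) (hw : w ≠ 0) : outerVec v w ≠ 0 := by
  obtain ⟨i, hi⟩ := Function.ne_iff.mp hv
  obtain ⟨j, hj⟩ := Function.ne_iff.mp hw
  intro h
  have h2 := congrFun h (finProdFinEquiv (i, j))
  simp only [outerVec, Equiv.symm_apply_apply, Pi.zero_apply] at h2
  rcases mul_eq_zero.mp h2 with h3 | h3
  · exact hi h3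
  · exact hj h3

/-- The Segre embedding of a product of projective spaces. -/
def segre {a b : ℕ} (p : PrV a × PrV b) : PrV (a * b) :=
  Projectivization.mk ℂ (outerVec p.1.rep p.2.rep)
    (outerVec_ne_zero p.1.rep_nonzero p.2.rep_nonzero)

/-- The Zariski topology on a product of two projective spaces (induced via the Segre
embedding). -/
def pairTop (r : ℕ) : TopologicalSpace (Pr r × Pr r) :=
  TopologicalSpace.induced segre (prTop ((r+1) * (r+1)))

/-- Zariski closure in the product of two projective spaces. -/
def closureP {r : ℕ} (S : Set (Pr r × Pr r)) : Set (Pr r × Pr r) :=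
  segre ⁻¹' closure (segre '' S)

/-- Zariski irreducibility of a subset of the product of two projective spaces. -/
def IsIrreducibleP {r : ℕ} (S : Set (Pr r × Pr r)) : Prop :=
  IsIrreducible (closure (segre '' S))

/-- Zariski connectedness of a subset of the product of two projective spaces. -/
def IsConnectedP {r : ℕ} (S : Set (Pr r × Pr r)) : Prop :=
  IsConnected (segre '' S)

/-- Dimension of a subset of the product of two projective spaces. -/
def pdimP {r : ℕ} (S : Set (Pr r × Pr r)) : WithBot ℕ∞ := pdim (segre '' S)

/-- The (ordered-pairs model of the) fibre of `f : I_Y → ℙ^r` over `z ∈ ℙ^r`: pairs of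
distinct points of `Y` whose secant line passes through `z`, together with limits of such
(the secant cone of `Y` at `z`, upstairs). -/
def secPairs {r : ℕ} (Y : Set (Pr r)) (z : Pr r) : Set (Pr r × Pr r) :=
  {p | p.1 ∈ Y ∧ p.2 ∈ Y ∧ p.1 ≠ p.2 ∧ z ∈ lineThrough p.1 p.2}

/-- The fibre of `f : I_Y → ℙ^r` over `z` (with its limit points). -/
def secFiber {r : ℕ} (Y : Set (Pr r)) (z : Pr r) : Set (Pr r × Pr r) :=
  closureP (secPairs Y z)

/-- The linear map `ℂ^b → ℂ^a` given by a matrix of coefficients. -/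
def matLin {a b : ℕ} (w : Fin a × Fin b → ℂ) : (Fin b → ℂ) →ₗ[ℂ] (Fin a → ℂ) :=
  Matrix.mulVecLin (Matrix.of fun i j => w (i, j))

/-- The image of a subset of `ℙ^{b-1}` under the linear projection `ℙ^{b-1} ⇢ ℙ^{a-1}`
given by a matrix. -/
def projImage {a b : ℕ} (w : Fin a × Fin b → ℂ) (Z : Set (PrV b)) : Set (PrV a) :=
  {z | ∃ x ∈ Z, ∃ c : ℂ, c ≠ 0 ∧ z.rep = c • matLin w x.rep}

/-- `X ⊆ ℙ^N` is the image of `X̃ ⊆ ℙ^{N+1}` under a bijective projection from a point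
`Q ∉ X̃` (the centre `Q` being the projectivized kernel of the surjective linear map `L`). -/
def IsBijectiveProjectionOf {N : ℕ} (X : Set (Pr N)) (Xt : Set (Pr (N+1))) : Prop :=
  ∃ L : (Fin (N+2) → ℂ) →ₗ[ℂ] (Fin (N+1) → ℂ), Function.Surjective L ∧
    (∀ x ∈ Xt, L x.rep ≠ 0) ∧
    X = {z | ∃ x ∈ Xt, ∃ c : ℂ, c ≠ 0 ∧ z.rep = c • L x.rep} ∧
    (∀ x ∈ Xt, ∀ y ∈ Xt, (∃ c : ℂ, L x.rep = c • L y.rep) → x = y)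

/-- `X ⊆ ℙ^N` is linearly normal if it is not the image, under a bijective projection from
a point, of a nondegenerate subvariety of `ℙ^{N+1}`. -/
def LinearlyNormal {N : ℕ} (X : Set (Pr N)) : Prop :=
  ¬ ∃ Xt : Set (Pr (N+1)), IsClosed Xt ∧ IsIrreducible Xt ∧ NondegenerateSet Xt ∧
      IsBijectiveProjectionOf X Xt

/-- Extension by zero `ℂ^a → ℂ^b` (for `a ≤ b`). -/
def padMap (a b : ℕ) : (Fin a → ℂ) →ₗ[ℂ] (Fin b → ℂ) where
  toFun v := fun j => if h : (j : ℕ) < a then v ⟨j, h⟩ else 0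
  map_add' v w := by funext j; by_cases h : (j : ℕ) < a <;> simp [h]
  map_smul' c v := by funext j; by_cases h : (j : ℕ) < a <;> simp [h]

lemma padMap_ne_zero {a b : ℕ} (hab : a ≤ b) {v : Fin a → ℂ} (hv : v ≠ 0) :
    padMap a b v ≠ 0 := by
  obtain ⟨i, hi⟩ := Function.ne_iff.mp hv
  intro h
  have h2 := congrFun h ⟨i, lt_of_lt_of_le i.isLt hab⟩
  simp only [padMap, LinearMap.coe_mk, AddHom.coe_mk, Pi.zero_apply] at h2
  rw [dif_pos i.isLt] at h2
  exact hi (by simpa using h2)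

/-- A point of `ℙ^{a-1}` viewed in `ℙ^{b-1}` via the inclusion of the first `a`
coordinates. -/
def embPt {a b : ℕ} (hab : a ≤ b) (x : PrV a) : PrV b :=
  Projectivization.mk ℂ (padMap a b x.rep) (padMap_ne_zero hab x.rep_nonzero)

/-- The join of two subsets of projective space: the union of all lines joining a point of
`A` to a point of `B`. -/
def joinSets {n : ℕ} (A B : Set (PrV n)) : Set (PrV n) :=
  ⋃ x ∈ A, ⋃ y ∈ B, lineThrough x y



theorem taylor_aux {n : ℕ} {R : Type*} [CommRing R] [Algebra ℂ R] (f : MvPolynomial (Fin n) ℂ)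
    (x y : Fin n → R) (t : R) :
    ∃ h : R, aeval (fun i => x i + t * y i) f
      = aeval x f + t * (∑ i, y i * aeval x (pderiv i f)) + t ^ 2 * h := by
  induction f using MvPolynomial.induction_on with
  | C a => exact ⟨0, by simp⟩
  | add p q hp hq =>
    obtain ⟨h1, e1⟩ := hp
    obtain ⟨h2, e2⟩ := hq
    refine ⟨h1 + h2, ?_⟩
    simp only [map_add, e1, e2, mul_add, Finset.sum_add_distrib]
    ring
  | mul_X p j hp =>
    obtain ⟨h1, e1⟩ := hp
    have hs : ∑ i, y i * aeval x (pderiv i (p * X j))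
        = (∑ i, y i * aeval x (pderiv i p)) * x j + aeval x p * y j := by
      simp only [Derivation.leibniz, map_add, smul_eq_mul, map_mul, aeval_X, pderiv_X, mul_add,
        Finset.sum_add_distrib]
      rw [add_comm]
      congr 1
      · rw [Finset.sum_mul]
        exact Finset.sum_congr rfl fun i _ => by ring
      · rw [Finset.sum_eq_single j]
        · simp; ring
        · intro b _ hb
          simp [hb.symm]
        · simp
    refine ⟨h1 * x j + t * h1 * y j + (∑ i, y i * aeval x (pderiv i p)) * y j, ?_⟩
    rw [hs, map_mul, map_mul, e1, aeval_X, aeval_X]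
    ring

/-- the ideal of the product -/
theorem prod_prime {n : ℕ} (I : Ideal (MvPolynomial (Fin n) ℂ)) (hp : I.IsPrime)
    (C : Set (Fin n → ℂ)) (hI : ∀ f, f ∈ I ↔ ∀ v ∈ C, eval v f = 0) :
    (MvPolynomial.vanishingIdeal ℂ
      {w : Fin n ⊕ Fin n → ℂ | ∃ a ∈ C, ∃ b ∈ C, w = Sum.elim a b}).IsPrime := by
  have key : ∀ f g, (∃ v ∈ C, eval v f ≠ 0) → (∃ v ∈ C, eval v g ≠ 0) →
      ∃ v ∈ C, eval v f ≠ 0 ∧ eval v g ≠ 0 := by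
    intro f g hf hg
    by_contra hcon
    push Not at hcon
    have : f * g ∈ I := by
      rw [hI]
      intro v hv
      rw [map_mul]
      by_cases h : eval v f = 0
      · simp [h]
      · simp [hcon v hv h]
    rcases hp.mem_or_mem this with h | h
    · obtain ⟨v, hv, h'⟩ := hf
      exact h' ((hI f).1 h v hv)
    · obtain ⟨v, hv, h'⟩ := hg
      exact h' ((hI g).1 h v hv)
  have hL : ∀ (F : MvPolynomial (Fin n ⊕ Fin n) ℂ) (a b : Fin n → ℂ),
      eval a (aeval (Sum.elim X (fun i => MvPolynomial.C (b i))) F : MvPolynomial (Fin n) ℂ)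
        = eval (Sum.elim a b) F := by
    intro F a b
    induction F using MvPolynomial.induction_on with
    | C a => simp
    | add p q hp hq => rw [map_add, map_add, map_add, hp, hq]
    | mul_X p j hp => rw [map_mul, map_mul, map_mul, hp]; cases j <;> simp
  have hR : ∀ (F : MvPolynomial (Fin n ⊕ Fin n) ℂ) (a b : Fin n → ℂ),
      eval b (aeval (Sum.elim (fun i => MvPolynomial.C (a i)) X) F : MvPolynomial (Fin n) ℂ)
        = eval (Sum.elim a b) F := by
    intro F a b
    induction F using MvPolynomial.induction_on with
    | C a => simp
    | add p q hp hq => rw [map_add, map_add, map_add, hp, hq]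
    | mul_X p j hp => rw [map_mul, map_mul, map_mul, hp]; cases j <;> simp
  constructor
  · intro h
    have h1 := (Ideal.eq_top_iff_one _).1 h
    apply hp.ne_top
    rw [Ideal.eq_top_iff_one, hI]
    intro v hv
    have := h1 (Sum.elim v v) ⟨v, hv, v, hv, rfl⟩
    simp at this
  · intro F G hFG
    by_contra hcon
    push Not at hcon
    obtain ⟨h1, h2⟩ := hcon
    simp only [MvPolynomial.mem_vanishingIdeal_iff, Set.mem_ofPred_eq] at h1 h2 hFG
    push Not at h1 h2
    obtain ⟨_, ⟨a1, ha1, b1, hb1, rfl⟩, h1⟩ := h1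
    obtain ⟨_, ⟨a2, ha2, b2, hb2, rfl⟩, h2⟩ := h2
    replace h1 : eval (Sum.elim a1 b1) F ≠ 0 := h1
    replace h2 : eval (Sum.elim a2 b2) G ≠ 0 := h2
    rw [← hL] at h1 h2
    obtain ⟨a, ha, h3, h4⟩ := key _ _ ⟨a1, ha1, h1⟩ ⟨a2, ha2, h2⟩
    rw [hL, ← hR] at h3 h4
    obtain ⟨b, hb, h5, h6⟩ := key _ _ ⟨b1, hb1, h3⟩ ⟨b2, hb2, h4⟩
    rw [hR] at h5 h6
    have : eval (Sum.elim a b) (F * G) = 0 := hFG _ ⟨a, ha, b, hb, rfl⟩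
    simp only [map_mul, mul_eq_zero] at this
    tauto

/-- valuation step -/
theorem val_step {n : ℕ} {K : Type} [Field K] [Algebra ℂ K] (b e : Fin n → K) (e0 : Fin n → ℂ)
    (i0 : Fin n)
    (hind : AlgebraicIndependent ℂ (fun o : Option (Fin n) => o.elim (b i0)⁻¹ e)) :
    ∃ V : ValuationSubring K, (∀ c : ℂ, algebraMap ℂ K c ∈ V) ∧ (∀ i, e i ∈ V) ∧
      (∀ i, e i - algebraMap ℂ K (e0 i) ∈ V.nonunits) ∧ (b i0)⁻¹ ∈ V.nonunits := by
  set φ := aeval (R := ℂ) (fun o : Option (Fin n) => o.elim (b i0)⁻¹ e) with hφ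
  let ψ := RingEquiv.ofLeftInverse (f := (φ : MvPolynomial (Option (Fin n)) ℂ →+* K))
    (Function.leftInverse_invFun hind)
  let ev : MvPolynomial (Option (Fin n)) ℂ →+* ℂ := eval (fun o => o.elim 0 e0)
  let J := (RingHom.ker ev).comap ψ.symm.toRingHom
  have hJ : J ≠ ⊤ := Ideal.comap_ne_top _ (RingHom.ker_ne_top _)
  obtain ⟨V, hV, hV2⟩ := Ideal.image_subset_nonunits_valuationSubring J hJ
  have h1 : ∀ p, φ p ∈ V := fun p => hV ⟨p, rfl⟩
  have h2 : ∀ p, ev p = 0 → φ p ∈ V.nonunits := by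
    intro p hp
    refine hV2 ⟨ψ p, ?_, rfl⟩
    change ev (ψ.symm (ψ p)) = 0
    simpa using hp
  refine ⟨V, fun c => by simpa [hφ] using h1 (MvPolynomial.C c),
    fun i => by simpa [hφ] using h1 (X (some i)), fun i => ?_, ?_⟩
  · have := h2 (X (some i) - MvPolynomial.C (e0 i)) (by simp [ev])
    simpa [hφ] using this
  · have := h2 (X none) (by simp [ev])
    simpa [hφ] using this
theorem map_aeval_eq {n : ℕ} {A B : Type*} [CommRing A] [CommRing B] [Algebra ℂ A] [Algebra ℂ B]
    (φ : A →ₐ[ℂ] B) (x : Fin n → A) (f : MvPolynomial (Fin n) ℂ) :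
    φ (aeval x f) = aeval (fun i => φ (x i)) f := by
  have : φ.comp (aeval x) = aeval (fun i => φ (x i)) := by
    ext i; simp
  exact DFunLike.congr_fun this f


theorem val_contra {n : ℕ} {K : Type} [Field K] [Algebra ℂ K] (I : Ideal (MvPolynomial (Fin n) ℂ))
    (hhom : ∀ f ∈ I, ∀ k, homogeneousComponent k f ∈ I)
    (b e : Fin n → K) (hb : ∀ f ∈ I, aeval b f = 0) (hbe : ∀ f ∈ I, aeval (b + e) f = 0)
    (e0 : Fin n → ℂ) (i0 : Fin n) (hb0 : b i0 ≠ 0)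
    (V : ValuationSubring K) (hVC : ∀ c : ℂ, algebraMap ℂ K c ∈ V) (hVe : ∀ i, e i ∈ V)
    (hVe0 : ∀ i, e i - algebraMap ℂ K (e0 i) ∈ V.nonunits) (hVb : (b i0)⁻¹ ∈ V.nonunits)
    (hnull : ∀ j : Fin n, ∃ d : ℕ, (X j ^ d : MvPolynomial (Fin n) ℂ) ∈
      Ideal.span {g | ∃ f ∈ I, g = f ∨ g = ∑ i, MvPolynomial.C (e0 i) * pderiv i f}) : False := by
  obtain ⟨j, -, hj⟩ := Finset.exists_max_image Finset.univ (fun i => V.valuation (b i))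
    ⟨i0, Finset.mem_univ _⟩
  have h1 : 1 < V.valuation (b i0) := by
    have := (ValuationSubring.mem_nonunits_iff (A := V)).1 hVb
    rw [map_inv₀] at this
    exact (inv_lt_one₀ (by simpa [zero_lt_iff] using hb0)).1 this
  have h2 : 1 < V.valuation (b j) := lt_of_lt_of_le h1 (hj i0 (Finset.mem_univ _))
  have hbj : b j ≠ 0 := by
    intro h
    simp [h] at h2
  have htlt : V.valuation (b j)⁻¹ < 1 := by
    rw [map_inv₀]
    exact inv_lt_one_of_one_lt₀ h2
  let _ : Algebra ℂ V := ((algebraMap ℂ K).codRestrict V.toSubring hVC).toAlgebra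
  have hcoe : ∀ c : ℂ, ((algebraMap ℂ V c : V) : K) = algebraMap ℂ K c := fun c => rfl
  let ι : V →ₐ[ℂ] K := { V.subtype with commutes' := fun c => rfl }
  have hιinj : Function.Injective ι := Subtype.val_injective
  let t : V := ⟨(b j)⁻¹, (V.valuation_le_one_iff _).1 htlt.le⟩
  let u : Fin n → V := fun i => ⟨(b j)⁻¹ * b i, by
    rw [← V.valuation_le_one_iff, map_mul, map_inv₀]
    rw [inv_mul_le_iff₀ (lt_trans zero_lt_one h2), mul_one]
    exact hj i (Finset.mem_univ _)⟩
  let ev : Fin n → V := fun i => ⟨e i, hVe i⟩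
  have ht0 : t ≠ 0 := by
    intro h
    have : (b j)⁻¹ = 0 := congrArg Subtype.val h
    simp [hbj] at this
  let ρ := IsLocalRing.residue V
  have hnon : ∀ x : V, (x : K) ∈ V.nonunits → ρ x = 0 := by
    intro x hx
    rw [IsLocalRing.residue_eq_zero_iff]
    exact ValuationSubring.coe_mem_nonunits_iff.1 hx
  have hρt : ρ t = 0 := hnon _ ((ValuationSubring.mem_nonunits_iff (A := V)).2 htlt)
  let _ : Algebra ℂ (IsLocalRing.ResidueField V) := (ρ.comp (algebraMap ℂ V)).toAlgebra
  let ρ' : V →ₐ[ℂ] IsLocalRing.ResidueField V := { ρ with commutes' := fun c => rfl }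
  have hρe : ∀ i, ρ' (ev i) = algebraMap ℂ _ (e0 i) := by
    intro i
    have : ρ (ev i - algebraMap ℂ V (e0 i)) = 0 := hnon _ (hVe0 i)
    rw [map_sub, sub_eq_zero] at this
    exact this
  let w := fun i => ρ' (u i)
  have hwj : w j = 1 := by
    have : u j = 1 := Subtype.ext (inv_mul_cancel₀ hbj)
    simp [w, this]
  -- homogeneous case
  have hscale : ∀ (f : MvPolynomial (Fin n) ℂ) (k : ℕ), f.IsHomogeneous k → ∀ (x : Fin n → K) (c : K),
      aeval (fun i => c * x i) f = c ^ k * aeval x f := by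
    intro f k hf x c
    simp only [aeval_def, eval₂_eq, Finset.mul_sum]
    refine Finset.sum_congr rfl fun d hd => ?_
    have hd' : ∑ i, d i = k := by
      have := hf (mem_support_iff.1 hd)
      rw [← this, Finsupp.weight_apply, Finsupp.sum_fintype] <;> simp
    have : ∏ i ∈ d.support, (c * x i) ^ d i = c ^ k * ∏ i ∈ d.support, x i ^ d i := by
      rw [← hd', ← Finsupp.sum_fintype d (fun _ m => m) (by simp), Finsupp.sum,
        ← Finset.prod_pow_eq_pow_sum, ← Finset.prod_mul_distrib]
      exact Finset.prod_congr rfl fun i _ => mul_pow _ _ _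
    rw [this]
    ring
  have hmain : ∀ f ∈ I, ∀ k, f.IsHomogeneous k →
      aeval w f = 0 ∧ ∑ i, algebraMap ℂ _ (e0 i) * aeval w (pderiv i f) = 0 := by
    intro f hf k hk
    have hu : aeval u f = 0 := by
      apply hιinj
      rw [map_zero, map_aeval_eq]
      have := hscale f k hk b (b j)⁻¹
      rw [hb f hf, mul_zero] at this
      exact this
    have hu2 : aeval (fun i => u i + t * ev i) f = 0 := by
      apply hιinj
      rw [map_zero, map_aeval_eq]
      have := hscale f k hk (b + e) (b j)⁻¹
      rw [hbe f hf, mul_zero] at this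
      rw [← this]
      congr 2
      funext i
      simp only [Pi.add_apply, mul_add]
      rfl
    obtain ⟨h, hh⟩ := taylor_aux f u ev t
    rw [hu, hu2] at hh
    have h3 : (∑ i, ev i * aeval u (pderiv i f)) = - (t * h) := by
      apply mul_left_cancel₀ ht0
      linear_combination -hh
    refine ⟨?_, ?_⟩
    · have := map_aeval_eq ρ' u f
      rw [hu, map_zero] at this
      exact this.symm
    · have h4 := congrArg ρ' h3
      rw [map_neg, map_mul, show ρ' t = 0 from hρt, zero_mul, neg_zero, map_sum] at h4
      rw [← h4]
      refine Finset.sum_congr rfl fun i _ => ?_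
      rw [map_mul, hρe, map_aeval_eq]
  have hall : ∀ f ∈ I, aeval w f = 0 ∧ ∑ i, algebraMap ℂ _ (e0 i) * aeval w (pderiv i f) = 0 := by
    intro f hf
    have hk := fun k => hmain _ (hhom f hf k) k (homogeneousComponent_isHomogeneous k f)
    rw [← sum_homogeneousComponent f]
    refine ⟨?_, ?_⟩
    · rw [map_sum]
      exact Finset.sum_eq_zero fun k _ => (hk k).1
    · simp only [map_sum, Finset.mul_sum]
      rw [Finset.sum_comm]
      exact Finset.sum_eq_zero fun k _ => (hk k).2
  obtain ⟨d, hd⟩ := hnull j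
  have hle : Ideal.span {g | ∃ f ∈ I, g = f ∨ g = ∑ i, MvPolynomial.C (e0 i) * pderiv i f} ≤
      RingHom.ker (aeval w : MvPolynomial (Fin n) ℂ →ₐ[ℂ] _) := by
    rw [Ideal.span_le]
    rintro g ⟨f, hf, rfl | rfl⟩
    · exact (hall _ hf).1
    · have := (hall _ hf).2
      simp only [SetLike.mem_coe, RingHom.mem_ker, map_sum, map_mul, aeval_C]
      exact this
  have := hle hd
  simp [RingHom.mem_ker, hwj] at this

theorem sum_eval {s : ℕ} (aa bb : Fin s → ℂ) (F : MvPolynomial (Fin s ⊕ Fin s) ℂ) :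
    eval aa (map (eval bb) (sumAlgEquiv ℂ (Fin s) (Fin s) F)) = eval (Sum.elim aa bb) F := by
  induction F using MvPolynomial.induction_on with
  | C c => rw [sumAlgEquiv_C_inl]; simp
  | add p q hp hq => rw [map_add, map_add, map_add, map_add, hp, hq]
  | mul_X p j hp =>
    rw [map_mul, map_mul, map_mul, map_mul, hp]
    cases j with
    | inl i => rw [sumAlgEquiv_X_inl]; simp
    | inr i => rw [sumAlgEquiv_X_inr]; simp


theorem core {n s : ℕ} (I : Ideal (MvPolynomial (Fin n) ℂ)) (hp : I.IsPrime)
    (C : Set (Fin n → ℂ)) (hC : ∀ v, v ∈ C ↔ ∀ f ∈ I, eval v f = 0)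
    (hI : ∀ f, f ∈ I ↔ ∀ v ∈ C, eval v f = 0)
    (hhom : ∀ f ∈ I, ∀ k, homogeneousComponent k f ∈ I)
    (x : Fin s → MvPolynomial (Fin n) ℂ)
    (hx : ∀ F : MvPolynomial (Fin s) ℂ, (∀ v ∈ C, eval (fun i => eval v (x i)) F = 0) → F = 0)
    (hs : n < 2 * s)
    (hdense : ∀ G : MvPolynomial (Fin n) ℂ, (∀ a ∈ C, ∀ b ∈ C, eval (a - b) G = 0) → G = 0)
    (e0 : Fin n → ℂ) :
    ∃ u ∈ C, u ≠ 0 ∧ ∀ f ∈ I, ∑ i, e0 i * eval u (pderiv i f) = 0 := by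
  by_contra hcon
  push Not at hcon
  have hnull : ∀ j : Fin n, ∃ d : ℕ, (X j ^ d : MvPolynomial (Fin n) ℂ) ∈
      Ideal.span {g | ∃ f ∈ I, g = f ∨ g = ∑ i, MvPolynomial.C (e0 i) * pderiv i f} := by
    intro j
    rw [← Ideal.mem_radical_iff, ← vanishingIdeal_zeroLocus_eq_radical (K := ℂ)]
    intro u hu
    by_contra hne
    have huC : u ∈ C := (hC u).2 fun f hf => hu f (Ideal.subset_span ⟨f, hf, Or.inl rfl⟩)
    obtain ⟨f, hf, h⟩ := hcon u huC (by rintro rfl; simp at hne)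
    apply h
    have := hu _ (Ideal.subset_span ⟨f, hf, Or.inr rfl⟩)
    simpa using this
  set S := {w : Fin n ⊕ Fin n → ℂ | ∃ a ∈ C, ∃ b ∈ C, w = Sum.elim a b} with hS
  set P := MvPolynomial.vanishingIdeal ℂ S with hP
  have hPp : P.IsPrime := prod_prime I hp C hI
  have hPm : ∀ F, F ∈ P ↔ ∀ a ∈ C, ∀ b ∈ C, eval (Sum.elim a b) F = 0 := by
    intro F
    constructor
    · intro h a ha b hb
      exact h _ ⟨a, ha, b, hb, rfl⟩
    · rintro h _ ⟨a, ha, b, hb, rfl⟩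
      exact h a ha b hb
  let B := MvPolynomial (Fin n ⊕ Fin n) ℂ ⧸ P
  let q : MvPolynomial (Fin n ⊕ Fin n) ℂ →ₐ[ℂ] B := Ideal.Quotient.mkₐ ℂ P
  have hq : ∀ F, q F = 0 ↔ F ∈ P := fun F => Ideal.Quotient.eq_zero_iff_mem
  have hqs : Function.Surjective q := Ideal.Quotient.mk_surjective
  let a : Fin n → B := fun i => q (X (Sum.inl i))
  let b : Fin n → B := fun i => q (X (Sum.inr i))
  let e : Fin n → B := fun i => a i - b i
  have hev : ∀ (f : MvPolynomial (Fin n) ℂ) (y : Fin n → MvPolynomial (Fin n ⊕ Fin n) ℂ)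
      (w : Fin n ⊕ Fin n → ℂ), eval w (aeval y f) = eval (fun i => eval w (y i)) f := by
    intro f y w
    have := map_aeval_eq (aeval w : MvPolynomial (Fin n ⊕ Fin n) ℂ →ₐ[ℂ] ℂ) y f
    exact this
  have he : AlgebraicIndependent ℂ e := by
    rw [algebraicIndependent_iff]
    intro G hG
    apply hdense
    intro a' ha' b' hb'
    have h1 : aeval e G = q (aeval (fun i => X (Sum.inl i) - X (Sum.inr i)) G) := by
      rw [map_aeval_eq]
      simp only [map_sub]
      rfl
    rw [h1, hq, hPm] at hG
    have := hG a' ha' b' hb'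
    rw [hev] at this
    simp only [map_sub, eval_X, Sum.elim_inl, Sum.elim_inr] at this
    exact this
  have hbI : ∀ f ∈ I, aeval b f = 0 := by
    intro f hf
    have h1 : aeval b f = q (aeval (fun i => X (Sum.inr i)) f) := by
      rw [map_aeval_eq]
    rw [h1, hq, hPm]
    intro a' ha' b' hb'
    rw [hev]
    simpa using (hI f).1 hf b' hb'
  have haI : ∀ f ∈ I, aeval a f = 0 := by
    intro f hf
    have h1 : aeval a f = q (aeval (fun i => X (Sum.inl i)) f) := by
      rw [map_aeval_eq]
    rw [h1, hq, hPm]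
    intro a' ha' b' hb'
    rw [hev]
    simpa using (hI f).1 hf a' ha'
  -- transcendence degree
  have hy : AlgebraicIndependent ℂ
      (Sum.elim (fun i => aeval a (x i)) (fun i => aeval b (x i)) : Fin s ⊕ Fin s → B) := by
    rw [algebraicIndependent_iff]
    intro F hF
    have hF2 : ∀ a' ∈ C, ∀ b' ∈ C,
        eval (Sum.elim (fun i => eval a' (x i)) (fun i => eval b' (x i))) F = 0 := by
      intro a' ha' b' hb'
      let y : Fin s ⊕ Fin s → MvPolynomial (Fin n ⊕ Fin n) ℂ :=
        Sum.elim (fun i => rename Sum.inl (x i)) (fun i => rename Sum.inr (x i))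
      have h1 : q (aeval y F) = 0 := by
        rw [← hF]
        have : q.comp (aeval y) = aeval (Sum.elim (fun i => aeval a (x i)) (fun i => aeval b (x i))) := by
          ext i
          cases i with
          | inl i =>
            simp only [AlgHom.comp_apply, aeval_X, Sum.elim_inl, y]
            have : q.comp (rename Sum.inl) = aeval a := by
              ext i
              simp [a]
            exact DFunLike.congr_fun this (x i)
          | inr i =>
            simp only [AlgHom.comp_apply, aeval_X, Sum.elim_inr, y]
            have : q.comp (rename Sum.inr) = aeval b := by
              ext i
              simp [b]
            exact DFunLike.congr_fun this (x i)
        exact DFunLike.congr_fun this F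
      rw [hq, hPm] at h1
      have h2 := h1 a' ha' b' hb'
      have h3 : (aeval (Sum.elim a' b') : MvPolynomial (Fin n ⊕ Fin n) ℂ →ₐ[ℂ] ℂ).comp (aeval y)
          = aeval (Sum.elim (fun i => eval a' (x i)) (fun i => eval b' (x i))) := by
        ext i
        cases i with
        | inl i =>
          simp only [AlgHom.comp_apply, aeval_X, Sum.elim_inl, y]
          rw [aeval_rename]
          rfl
        | inr i =>
          simp only [AlgHom.comp_apply, aeval_X, Sum.elim_inr, y]
          rw [aeval_rename]
          rfl
      exact (DFunLike.congr_fun h3 F).symm.trans h2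
    -- F as polynomial in left variables with coefficients in right ones
    have hF3 : sumAlgEquiv ℂ (Fin s) (Fin s) F = 0 := by
      ext d : 1
      rw [coeff_zero]
      apply hx
      intro b' hb'
      have hz : map (eval (fun i => eval b' (x i))) (sumAlgEquiv ℂ (Fin s) (Fin s) F) = 0 := by
        apply hx
        intro a' ha'
        rw [← hF2 a' ha' b' hb']
        exact sum_eval _ _ F
      have := congrArg (coeff d) hz
      simpa [coeff_map] using this
    simpa using hF3
  have htr : ∃ i0, Transcendental (Algebra.adjoin ℂ (range e)) (b i0) := by
    by_contra hno
    push Not at hno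
    have hno : ∀ i, IsAlgebraic (Algebra.adjoin ℂ (range e)) (b i) := fun i => not_not.1 (hno i)
    let T := Subalgebra.algebraicClosure (Algebra.adjoin ℂ (range e)) B
    have hee : ∀ i, e i ∈ T := fun i =>
      T.algebraMap_mem ⟨e i, Algebra.subset_adjoin ⟨i, rfl⟩⟩
    have hT : ∀ F, q F ∈ T := by
      intro F
      induction F using MvPolynomial.induction_on with
      | C c =>
        have := T.algebraMap_mem (algebraMap ℂ (Algebra.adjoin ℂ (range e)) c)
        exact this
      | add p q' hp hq' => rw [map_add]; exact T.add_mem hp hq'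
      | mul_X p j hp =>
        rw [map_mul]
        refine T.mul_mem hp ?_
        cases j with
        | inl i =>
          have := T.add_mem (hno i : b i ∈ T) (hee i)
          simpa [e, a, b] using this
        | inr i => exact hno i
    have hal : Algebra.IsAlgebraic (Algebra.adjoin ℂ (range e)) B := by
      constructor
      intro z
      obtain ⟨F, rfl⟩ := hqs z
      exact hT F
    have h1 := Algebra.IsAlgebraic.trdeg_le_cardinalMk ℂ (range e)
    have h2 := hy.cardinalMk_le_trdeg
    have h3 := h2.trans (h1.trans Cardinal.mk_range_le)
    simp only [Cardinal.mk_sum, Cardinal.mk_fin, Cardinal.lift_natCast] at h3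
    norm_cast at h3
    omega
  obtain ⟨i0, hi0⟩ := htr
  let K := FractionRing B
  let κ : B →ₐ[ℂ] K := IsScalarTower.toAlgHom ℂ B K
  have hκ : Function.Injective κ := IsFractionRing.injective B K
  have hind1 : AlgebraicIndependent ℂ (fun o : Option (Fin n) => o.elim (b i0) e) :=
    AlgebraicIndependent.option_iff.2 ⟨he, hi0⟩
  have hind2 := hind1.map' hκ
  have hind3 : AlgebraicIndependent ℂ
      (fun o : Option (Fin n) => o.elim (κ (b i0)) (fun i => κ (e i))) := by
    convert hind2 using 1
    funext o
    cases o <;> rfl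
  obtain ⟨h4, h5⟩ := AlgebraicIndependent.option_iff.1 hind3
  have hind4 : AlgebraicIndependent ℂ
      (fun o : Option (Fin n) => o.elim (κ (b i0))⁻¹ (fun i => κ (e i))) := by
    refine AlgebraicIndependent.option_iff.2 ⟨h4, ?_⟩
    intro h6
    have h7 := h6.inv
    rw [inv_inv] at h7
    exact h5 h7
  have hb0 : κ (b i0) ≠ 0 := by
    intro h
    rw [h] at h5
    exact h5 isAlgebraic_zero
  obtain ⟨V, hV1, hV2, hV3, hV4⟩ := val_step (fun i => κ (b i)) (fun i => κ (e i)) e0 i0 hind4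
  refine val_contra I hhom (fun i => κ (b i)) (fun i => κ (e i)) ?_ ?_ e0 i0 hb0 V hV1 hV2 hV3 hV4
    hnull
  · intro f hf
    rw [← map_aeval_eq, hbI f hf, map_zero]
  · intro f hf
    have : ((fun i => κ (b i)) + fun i => κ (e i)) = fun i => κ (a i) := by
      funext i
      simp [e]
    rw [this, ← map_aeval_eq, haI f hf, map_zero]

def linePoly {n : ℕ} (v : Fin n → ℂ) : MvPolynomial (Fin n) ℂ →ₐ[ℂ] Polynomial ℂ :=
  aeval (fun i => Polynomial.C (v i) * Polynomial.X)

theorem lp_eval {n : ℕ} (v : Fin n → ℂ) (f : MvPolynomial (Fin n) ℂ) (t : ℂ) :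
    (linePoly v f).eval t = eval (t • v) f := by
  induction f using MvPolynomial.induction_on with
  | C c => simp [linePoly]
  | add p q hp hq => rw [map_add, Polynomial.eval_add, hp, hq, map_add]
  | mul_X p j hp =>
    rw [map_mul, Polynomial.eval_mul, hp, map_mul]
    rw [linePoly, aeval_X, eval_X, Polynomial.eval_mul, Polynomial.eval_C, Polynomial.eval_X,
      Pi.smul_apply, smul_eq_mul, mul_comm (v j) t]

theorem lp_eq_zero {n : ℕ} (v : Fin n → ℂ) (f : MvPolynomial (Fin n) ℂ)
    (h : ∀ t : ℂ, t ≠ 0 → eval (t • v) f = 0) : linePoly v f = 0 := by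
  apply Polynomial.eq_zero_of_infinite_isRoot
  refine Set.Infinite.mono (s := {0}ᶜ) ?_ (Set.finite_singleton (0 : ℂ)).infinite_compl
  intro t ht
  change (linePoly v f).eval t = 0
  rw [lp_eval]
  exact h t ht

theorem mem_pZero {n : ℕ} (v : Fin n → ℂ) (hv : v ≠ 0) (f : MvPolynomial (Fin n) ℂ) :
    Projectivization.mk ℂ v hv ∈ pZero f ↔ linePoly v f = 0 := by
  constructor
  · intro h
    apply lp_eq_zero
    intro t ht
    apply h (t • v) (smul_ne_zero ht hv)
    rw [Projectivization.mk_eq_mk_iff']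
    exact ⟨t, rfl⟩
  · intro h w hw hwv
    rw [Projectivization.mk_eq_mk_iff'] at hwv
    obtain ⟨t, rfl⟩ := hwv
    rw [← lp_eval, h, Polynomial.eval_zero]

theorem mem_pZero' {n : ℕ} (x : PrV n) (f : MvPolynomial (Fin n) ℂ) :
    x ∈ pZero f ↔ linePoly x.rep f = 0 := by
  rw [← mem_pZero x.rep x.rep_nonzero, Projectivization.mk_rep]

theorem isClosed_pZero {n : ℕ} (f : MvPolynomial (Fin n) ℂ) : IsClosed (pZero f) :=
  ⟨TopologicalSpace.isOpen_generateFrom_of_mem ⟨f, rfl⟩⟩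

theorem open_basis {n : ℕ} (U : Set (PrV n)) (hU : IsOpen U) (x : PrV n) (hx : x ∈ U) :
    ∃ f, x ∉ pZero f ∧ ∀ y ∉ U, y ∈ pZero f := by
  induction hU with
  | basic s hs =>
    obtain ⟨f, rfl⟩ := hs
    exact ⟨f, hx, fun y hy => not_not.1 hy⟩
  | univ =>
    refine ⟨1, ?_, fun y hy => (hy trivial).elim⟩
    rw [mem_pZero', map_one]
    exact one_ne_zero
  | inter s t _ _ hs ht =>
    obtain ⟨f, hf, hf'⟩ := hs hx.1
    obtain ⟨g, hg, hg'⟩ := ht hx.2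
    refine ⟨f * g, ?_, ?_⟩
    · rw [mem_pZero'] at *
      rw [map_mul]
      exact mul_ne_zero hf hg
    · intro y hy
      rw [mem_pZero', map_mul]
      by_cases h : y ∈ s
      · rw [(mem_pZero' y g).1 (hg' y fun h2 => hy ⟨h, h2⟩), mul_zero]
      · rw [(mem_pZero' y f).1 (hf' y h), zero_mul]
  | sUnion S _ ih =>
    obtain ⟨s, hs, hxs⟩ := hx
    obtain ⟨f, hf, hf'⟩ := ih s hs hxs
    exact ⟨f, hf, fun y hy => hf' y fun h => hy ⟨s, hs, h⟩⟩

theorem mem_idealOf {n : ℕ} (Y : Set (PrV n)) (f : MvPolynomial (Fin n) ℂ) :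
    f ∈ idealOf Y ↔ Y ⊆ pZero f := Iff.rfl

theorem mem_closed_iff {n : ℕ} (Y : Set (PrV n)) (hY : IsClosed Y) (x : PrV n) :
    x ∈ Y ↔ ∀ f ∈ idealOf Y, x ∈ pZero f := by
  constructor
  · intro h f hf
    exact hf h
  · intro h
    by_contra hx
    obtain ⟨f, hf, hf'⟩ := open_basis Yᶜ hY.isOpen_compl x hx
    exact hf (h f fun y hy => hf' y fun h => h hy)

theorem idealOf_prime {n : ℕ} (Y : Set (PrV n)) (hY : IsIrreducible Y) : (idealOf Y).IsPrime := by
  refine ⟨?_, ?_⟩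
  · rw [Ideal.ne_top_iff_one]
    intro h
    obtain ⟨x, hx⟩ := hY.1
    have := h hx
    rw [mem_pZero', map_one] at this
    exact one_ne_zero this
  · intro f g hfg
    refine (isPreirreducible_iff_isClosed_union_isClosed.1 hY.2) _ _ (isClosed_pZero f)
      (isClosed_pZero g) ?_
    intro x hx
    have := hfg hx
    rw [mem_pZero', map_mul, mul_eq_zero] at this
    rwa [Set.mem_union, mem_pZero', mem_pZero']

theorem idealOf_anti {n : ℕ} {Y Z : Set (PrV n)} (h : Y ⊆ Z) : idealOf Z ≤ idealOf Y :=
  fun _ hf => h.trans hf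

theorem idealOf_closed {n : ℕ} {Y Z : Set (PrV n)} (hZ : IsClosed Z)
    (h : idealOf Z ≤ idealOf Y) : Y ⊆ Z := by
  intro x hx
  rw [mem_closed_iff Z hZ]
  intro f hf
  exact h hf hx

theorem lp_homog {n : ℕ} (v : Fin n → ℂ) (f : MvPolynomial (Fin n) ℂ) (k : ℕ)
    (hf : f.IsHomogeneous k) : linePoly v f = Polynomial.monomial k (eval v f) := by
  apply Polynomial.funext
  intro t
  rw [lp_eval, Polynomial.eval_monomial, eval_eq, eval_eq, Finset.sum_mul]
  apply Finset.sum_congr rfl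
  intro d hd
  have hd' := hf (mem_support_iff.1 hd)
  rw [Finsupp.weight_apply, Finsupp.sum] at hd'
  simp only [Pi.one_apply, smul_eq_mul, mul_one] at hd'
  rw [← hd', ← Finset.prod_pow_eq_pow_sum, mul_assoc, ← Finset.prod_mul_distrib]
  simp only [Pi.smul_apply, smul_eq_mul, mul_pow]
  congr 1
  apply Finset.prod_congr rfl
  intros
  ring

theorem lp_coeff {n : ℕ} (v : Fin n → ℂ) (f : MvPolynomial (Fin n) ℂ) (k : ℕ) :
    (linePoly v f).coeff k = eval v (homogeneousComponent k f) := by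
  have h : linePoly v f = ∑ j ∈ Finset.range (f.totalDegree + 1),
      Polynomial.monomial j (eval v (homogeneousComponent j f)) := by
    conv_lhs => rw [← sum_homogeneousComponent f, map_sum]
    exact Finset.sum_congr rfl fun j _ => lp_homog v _ j (homogeneousComponent_isHomogeneous j f)
  rw [h, Polynomial.finsetSum_coeff]
  simp only [Polynomial.coeff_monomial]
  rw [Finset.sum_ite_eq']
  split_ifs with hk
  · rfl
  · rw [homogeneousComponent_eq_zero _ _ (by simpa using hk), map_zero]

theorem idealOf_hom {n : ℕ} (Y : Set (PrV n)) (f : MvPolynomial (Fin n) ℂ) (hf : f ∈ idealOf Y)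
    (k : ℕ) : homogeneousComponent k f ∈ idealOf Y := by
  intro x hx
  have h := hf hx
  rw [mem_pZero'] at *
  rw [lp_homog _ _ k (homogeneousComponent_isHomogeneous k f), ← lp_coeff, h]
  simp

def cone {n : ℕ} (Y : Set (PrV n)) : Set (Fin n → ℂ) := {v | ∀ f ∈ idealOf Y, eval v f = 0}

theorem cone_smul {n : ℕ} (Y : Set (PrV n)) (v : Fin n → ℂ) (hv : v ∈ cone Y) (t : ℂ) :
    t • v ∈ cone Y := by
  intro f hf
  have : linePoly v f = 0 := by
    ext k
    rw [lp_coeff]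
    exact hv _ (idealOf_hom Y f hf k)
  rw [← lp_eval, this, Polynomial.eval_zero]

theorem rep_mem_cone {n : ℕ} (Y : Set (PrV n)) (x : PrV n) (hx : x ∈ Y) : x.rep ∈ cone Y := by
  intro f hf
  exact hf hx x.rep x.rep_nonzero x.mk_rep

theorem mk_mem {n : ℕ} (Y : Set (PrV n)) (hY : IsClosed Y) (v : Fin n → ℂ) (hv : v ≠ 0)
    (h : v ∈ cone Y) : Projectivization.mk ℂ v hv ∈ Y := by
  rw [mem_closed_iff Y hY]
  intro f hf
  rw [mem_pZero]
  apply lp_eq_zero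
  intro t _
  exact cone_smul Y v h t f hf

theorem mem_idealOf_iff {n : ℕ} (Y : Set (PrV n)) (f : MvPolynomial (Fin n) ℂ) :
    f ∈ idealOf Y ↔ ∀ v ∈ cone Y, eval v f = 0 := by
  constructor
  · intro h v hv
    exact hv f h
  · intro h x hx
    rw [mem_pZero']
    apply lp_eq_zero
    intro t _
    exact h _ (cone_smul Y _ (rep_mem_cone Y x hx) t)

theorem idealOf_irrel {n : ℕ} (Y : Set (PrV n)) (hY : Y.Nonempty) :
    idealOf Y < RingHom.ker (eval (0 : Fin n → ℂ)) := by
  obtain ⟨x, hx⟩ := hY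
  have h0 : (0 : Fin n → ℂ) ∈ cone Y := by
    have := cone_smul Y _ (rep_mem_cone Y x hx) 0
    rwa [zero_smul] at this
  rw [SetLike.lt_iff_le_and_exists]
  refine ⟨fun f hf => h0 f hf, ?_⟩
  obtain ⟨i, hi⟩ := Function.ne_iff.1 x.rep_nonzero
  refine ⟨X i, by simp, ?_⟩
  intro h
  have := rep_mem_cone Y x hx _ h
  simp at this
  exact hi this

theorem dense_aux {n : ℕ} (Y : Set (PrV n)) (hn : 0 < n) (h : secantVariety Y = Set.univ)
    (G : MvPolynomial (Fin n) ℂ) (hG : ∀ a ∈ cone Y, ∀ b ∈ cone Y, eval (a - b) G = 0) :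
    G = 0 := by
  have h1 : secantVariety Y ⊆ pZero G := by
    apply closure_minimal _ (isClosed_pZero G)
    intro z hz
    simp only [Set.mem_iUnion] at hz
    obtain ⟨x, hx, y, hy, _, hz⟩ := hz
    rw [mem_pZero']
    apply lp_eq_zero
    intro t _
    obtain ⟨α, β, hab⟩ := Submodule.mem_span_pair.1 hz
    rw [← hab]
    have := hG ((t * α) • x.rep) (cone_smul Y _ (rep_mem_cone Y x hx) _)
      ((-(t * β)) • y.rep) (cone_smul Y _ (rep_mem_cone Y y hy) _)
    rw [← this]
    congr 2
    rw [neg_smul, sub_neg_eq_add, smul_add, smul_smul, smul_smul]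
  rw [h] at h1
  have h2 : X ⟨0, hn⟩ * G = 0 := by
    apply MvPolynomial.funext
    intro v
    by_cases hv : v = 0
    · subst hv; simp
    · rw [map_mul, h1 (Set.mem_univ (Projectivization.mk ℂ v hv)) v hv rfl]
      simp
  rcases mul_eq_zero.1 h2 with h3 | h3
  · exact absurd h3 (X_ne_zero _)
  · exact h3

theorem chain_aux {n : ℕ} (c : ℂ) (f : MvPolynomial (Fin n) ℂ) (i : Fin n) :
    pderiv i (aeval (fun j => MvPolynomial.C c * X j) f : MvPolynomial (Fin n) ℂ)
      = MvPolynomial.C c * aeval (fun j => MvPolynomial.C c * X j) (pderiv i f) := by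
  induction f using MvPolynomial.induction_on with
  | C a => simp [algebraMap_eq]
  | add p q hp hq => simp only [map_add, hp, hq, mul_add]
  | mul_X p j hp =>
    rw [map_mul, pderiv_mul, hp, pderiv_mul, map_add, map_mul, map_mul, aeval_X, pderiv_mul,
      pderiv_X, pderiv_C]
    by_cases hij : i = j
    · subst hij; simp; ring
    · simp [Pi.single_apply, hij, Ne.symm hij]
      ring

theorem eval_scale {n : ℕ} (c : ℂ) (f : MvPolynomial (Fin n) ℂ) (v : Fin n → ℂ) :
    eval v (aeval (fun j => MvPolynomial.C c * X j) f : MvPolynomial (Fin n) ℂ)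
      = eval (c • v) f := by
  induction f using MvPolynomial.induction_on with
  | C a => simp [algebraMap_eq]
  | add p q hp hq => simp only [map_add, hp, hq]
  | mul_X p j hp =>
    rw [map_mul, map_mul, hp, map_mul]
    simp

theorem dim_aux {n m : ℕ} (Y : Set (PrV n)) (hcl : IsClosed Y) (hirr : IsIrreducible Y)
    (hdim : pdim Y = ((m : ℕ∞) : WithBot ℕ∞)) :
    ∃ s, m + 1 ≤ s ∧ ∃ x : Fin s → MvPolynomial (Fin n) ℂ,
      ∀ F : MvPolynomial (Fin s) ℂ,
        (∀ v ∈ cone Y, eval (fun i => eval v (x i)) F = 0) → F = 0 := by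
  have hp := idealOf_prime Y hirr
  obtain ⟨s, g, hg, hint⟩ :=
    exists_integral_inj_algHom_of_fg ℂ (MvPolynomial (Fin n) ℂ ⧸ idealOf Y)
  choose x hx using fun i : Fin s => Ideal.Quotient.mk_surjective (g (X i))
  refine ⟨s, ?_, x, ?_⟩
  · let Q := MvPolynomial (Fin n) ℂ ⧸ idealOf Y
    let A := MvPolynomial (Fin s) ℂ
    let J : WithBot (TopologicalSpace.IrreducibleCloseds Y) → Ideal (MvPolynomial (Fin n) ℂ) :=
      fun o => o.recBotCoe (RingHom.ker (eval (0 : Fin n → ℂ)))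
        (fun Z => idealOf (Subtype.val '' (Z : Set Y)))
    have hJp : ∀ o, (J o).IsPrime := by
      intro o
      induction o with
      | bot => exact RingHom.ker_isPrime _
      | coe Z => exact idealOf_prime _ (Z.isIrreducible.image _ continuous_subtype_val.continuousOn)
    have hJI : ∀ o, idealOf Y ≤ J o := by
      intro o
      induction o with
      | bot => exact (idealOf_irrel Y hirr.1).le
      | coe Z => exact idealOf_anti (by rintro _ ⟨z, _, rfl⟩; exact z.2)
    have hJlt : ∀ o o', o < o' → J o' < J o := by
      intro o o' h
      induction o' with
      | bot => exact absurd h not_lt_bot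
      | coe Z' =>
        induction o with
        | bot => exact idealOf_irrel _ (Z'.isIrreducible.1.image _)
        | coe Z =>
          rw [WithBot.coe_lt_coe] at h
          refine lt_of_le_not_ge (idealOf_anti (Set.image_mono h.le)) fun h2 => ?_
          have := idealOf_closed (hcl.isClosedEmbedding_subtypeVal.isClosedMap _ Z.isClosed) h2
          rw [Set.image_subset_image_iff Subtype.val_injective] at this
          exact h.not_ge this
    let mk := Ideal.Quotient.mk (idealOf Y)
    have hcm : ∀ o, ((J o).map mk).comap mk = J o := by
      intro o
      rw [Ideal.comap_map_of_surjective _ Ideal.Quotient.mk_surjective]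
      apply sup_eq_left.2
      refine le_trans ?_ (hJI o)
      rw [← RingHom.ker_eq_comap_bot, Ideal.mk_ker]
    have hmp : ∀ o, ((J o).map mk).IsPrime := by
      intro o
      have := hJp o
      apply Ideal.map_isPrime_of_surjective Ideal.Quotient.mk_surjective
      rw [Ideal.mk_ker]
      exact hJI o
    letI : Algebra A Q := g.toRingHom.toAlgebra
    haveI : Algebra.IsIntegral A Q := ⟨hint⟩
    let φ : WithBot (TopologicalSpace.IrreducibleCloseds Y) → (PrimeSpectrum A)ᵒᵈ := fun o =>
      OrderDual.toDual ⟨((J o).map mk).comap (algebraMap A Q), by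
        have := hmp o
        infer_instance⟩
    have hφ : StrictMono φ := by
      intro o o' h
      change ((J o').map mk).comap (algebraMap A Q) < ((J o).map mk).comap (algebraMap A Q)
      have := hmp o'
      apply Ideal.IsIntegral.comap_lt_comap
      refine lt_of_le_of_ne (Ideal.map_mono (hJlt _ _ h).le) fun h2 => ?_
      have h3 := hJlt _ _ h
      rw [← hcm o, ← hcm o', h2] at h3
      exact lt_irrefl _ h3
    have h1 := Order.krullDim_le_of_strictMono φ hφ
    have hne : Nonempty (TopologicalSpace.IrreducibleCloseds Y) := by
      have : IrreducibleSpace Y := isIrreducible_iff_irreducibleSpace.1 hirr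
      exact ⟨⟨Set.univ, IrreducibleSpace.isIrreducible_univ Y, isClosed_univ⟩⟩
    rw [Order.krullDim_orderDual, Order.krullDim_withBot] at h1
    have h2 : Order.krullDim (PrimeSpectrum A) = s := by
      change ringKrullDim A = s
      rw [MvPolynomial.ringKrullDim_of_isNoetherianRing, ringKrullDim_eq_zero_of_field]
      simp
    have h3 : Order.krullDim (TopologicalSpace.IrreducibleCloseds Y) = ((m : ℕ∞) : WithBot ℕ∞) :=
      hdim
    rw [h2, h3] at h1
    exact_mod_cast h1
  · intro F hF
    apply hg
    rw [map_zero]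
    have h1 : g F = Ideal.Quotient.mkₐ ℂ (idealOf Y) (aeval x F) := by
      have : g = (Ideal.Quotient.mkₐ ℂ (idealOf Y)).comp (aeval x) := by
        ext i
        simp [← hx]
      exact DFunLike.congr_fun this F
    rw [h1]
    refine Ideal.Quotient.eq_zero_iff_mem.2 ((mem_idealOf_iff Y _).2 fun v hv => ?_)
    rw [← hF v hv]
    have h2 : (aeval v : MvPolynomial (Fin n) ℂ →ₐ[ℂ] ℂ).comp (aeval x)
        = aeval (fun i => eval v (x i)) := by
      ext i
      simp [aeval_eq_eval]
    exact DFunLike.congr_fun h2 F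

/-- **(Consequence of the Fulton–Hansen connectedness theorem.)**  Let `Y ⊆ ℙ^r` be an
irreducible, non-projectable `m`-dimensional subvariety with `2m ≥ r`.  Then
`f(π⁻¹(E_Y)) = ℙ^r`: the union of the embedded tangent spaces (= union of the embedded
tangent lines, the limits of secant lines at coincident pairs of points) of `Y` is all of
`ℙ^r`. -/
theorem tangent_lines_fill_space
    (r m : ℕ) (Y : Set (Pr r))
    (hcl : IsClosed Y) (hirr : IsIrreducible Y)
    (hdim : pdim Y = ((m : ℕ∞) : WithBot ℕ∞))
    (hnonproj : secantVariety Y = Set.univ)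
    (hr : r ≤ 2 * m) :
    ⋃ y ∈ Y, projTangent Y y = Set.univ := by
  rw [Set.eq_univ_iff_forall]
  intro z
  obtain ⟨s, hs, x, hx⟩ := dim_aux Y hcl hirr hdim
  obtain ⟨u, huC, hu0, hu⟩ := core (idealOf Y) (idealOf_prime Y hirr) (cone Y) (fun v => Iff.rfl)
    (mem_idealOf_iff Y) (idealOf_hom Y) x hx (by omega)
    (dense_aux Y (Nat.succ_pos r) hnonproj) z.rep
  have hy := mk_mem Y hcl u hu0 huC
  refine Set.mem_biUnion hy ?_
  obtain ⟨c, hc⟩ := (Projectivization.mk_eq_mk_iff' ℂ _ _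
    (Projectivization.rep_nonzero _) hu0).1 (Projectivization.mk_rep (Projectivization.mk ℂ u hu0))
  have hc0 : c ≠ 0 := by
    rintro rfl
    rw [zero_smul] at hc
    exact Projectivization.rep_nonzero _ hc.symm
  change z.rep ∈ affTangent Y (Projectivization.mk ℂ u hu0).rep
  rw [← hc, affTangent]
  simp only [Submodule.mem_iInf, LinearMap.mem_ker]
  intro f hf
  have hf' : (aeval (fun j => MvPolynomial.C c * X j) f : MvPolynomial (Fin (r + 1)) ℂ)
      ∈ idealOf Y := by
    rw [mem_idealOf_iff]
    intro v hv
    rw [eval_scale]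
    exact cone_smul Y v hv c f hf
  have h1 := hu _ hf'
  simp only [chain_aux, map_mul, eval_C, eval_scale] at h1
  have h2 : jacLin f (c • u) z.rep = ∑ i, z.rep i * eval (c • u) (pderiv i f) := by
    simp [jacLin, mul_comm]
  rw [h2]
  have h3 : c * ∑ i, z.rep i * eval (c • u) (pderiv i f) = 0 := by
    rw [← h1, Finset.mul_sum]
    exact Finset.sum_congr rfl fun i _ => by ring
  exact (mul_eq_zero.1 h3).resolve_left hc0

end
end
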